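/- Let X be a tree and let f : X → X be a continuous map with zero topological entropy, h(f) = 0. Then the supremum of topological sequence entropies of f restricted to its ω-limit set, to its non-wandering set, and to its chain recurrent set are all zero: h_∞(f|_{ω(f)}) = h_∞(f|_{Ω(f)}) = h_∞(f|_{CR(f)}) = 0. -/

import Mathlib

open Set Filter Topology Function
open scoped ENNReal

/-- A subset of a topological space is an *arc* if it is homeomorphic to `[0,1]`. -/
def IsArc {X : Type*} [TopologicalSpace X] (A : Set X) : Prop :=
  Nonempty (A ≃ₜ Set.Icc (0 : ℝ) 1)

/-- A point `p` is an *endpoint* of the arc `A` if `p ∈ A` and `A \ {p}` is connected. -/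
def IsArcEndpoint {X : Type*} [TopologicalSpace X] (A : Set X) (p : X) : Prop :=
  p ∈ A ∧ IsConnected (A \ {p})

/-- A subset is a *simple closed curve* if it is homeomorphic to the unit circle. -/
def IsSimpleClosedCurve {X : Type*} [TopologicalSpace X] (S : Set X) : Prop :=
  Nonempty (S ≃ₜ Metric.sphere (0 : ℂ) 1)

/-- A *tree* is a compact connected metric space which is a union of finitely many arcs,
any two of which are disjoint or intersect only in (one or both of) their endpoints,
and which contains no simple closed curve. -/
def IsTree (X : Type*) [MetricSpace X] : Prop :=
  CompactSpace X ∧ ConnectedSpace X ∧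
    (∃ 𝒜 : Finset (Set X), (∀ A ∈ 𝒜, IsArc A) ∧ ⋃₀ (𝒜 : Set (Set X)) = Set.univ ∧
      ∀ A ∈ 𝒜, ∀ B ∈ 𝒜, A ≠ B → ∀ p ∈ A ∩ B, IsArcEndpoint A p ∧ IsArcEndpoint B p) ∧
    ∀ S : Set X, ¬ IsSimpleClosedCurve S

/-- A *dendrite* is a locally connected continuum containing no simple closed curve. -/
def IsDendrite (X : Type*) [MetricSpace X] : Prop :=
  CompactSpace X ∧ ConnectedSpace X ∧ LocallyConnectedSpace X ∧
    ∀ S : Set X, ¬ IsSimpleClosedCurve S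

/-- `𝒰` is a finite open cover of the subset `Y`. -/
def IsOpenCoverOn {X : Type*} [TopologicalSpace X] (Y : Set X) (𝒰 : Finset (Set X)) : Prop :=
  (∀ U ∈ 𝒰, IsOpen U) ∧ Y ⊆ ⋃₀ (𝒰 : Set (Set X))

/-- `N(⋁_{i=1}^n f^{-a_i}(𝒰))`, relative to the subset `Y`: the minimal number `m` of elements
of the join cover `⋁_{i=1}^n f^{-a_i}(𝒰)` needed to cover `Y`. -/
noncomputable def seqCoverCountOn {X : Type*} (f : X → X) (Y : Set X) (a : ℕ → ℕ)
    (𝒰 : Finset (Set X)) (n : ℕ) : ℕ :=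
  sInf { m | ∃ c : Fin m → Fin n → Set X, (∀ j i, c j i ∈ 𝒰) ∧
    Y ⊆ ⋃ j, ⋂ i, f^[a i.1] ⁻¹' c j i }

/-- Topological sequence entropy of `f` restricted to the (invariant) subset `Y`,
with respect to the sequence `a`. -/
noncomputable def seqEntropyOn {X : Type*} [TopologicalSpace X] (f : X → X) (Y : Set X)
    (a : ℕ → ℕ) : ℝ≥0∞ :=
  ⨆ (𝒰 : Finset (Set X)) (_ : IsOpenCoverOn Y 𝒰),
    Filter.limsup
      (fun n : ℕ => ENNReal.ofReal (Real.log (seqCoverCountOn f Y a 𝒰 n) / n)) Filter.atTop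

/-- Topological sequence entropy of `f : X → X` with respect to the sequence `a`. -/
noncomputable def seqEntropy {X : Type*} [TopologicalSpace X] (f : X → X) (a : ℕ → ℕ) : ℝ≥0∞ :=
  seqEntropyOn f Set.univ a

/-- The ordinary topological entropy `h(f)`, i.e. the sequence entropy for `A = (0,1,2,…)`. -/
noncomputable def topEntropy {X : Type*} [TopologicalSpace X] (f : X → X) : ℝ≥0∞ :=
  seqEntropy f id

/-- `h_∞(f|_Y)`: the supremum over all strictly increasing sequences of positive integers of
the topological sequence entropies of `f` restricted to `Y`. -/
noncomputable def supSeqEntropyOn {X : Type*} [TopologicalSpace X] (f : X → X) (Y : Set X) :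
    ℝ≥0∞ :=
  ⨆ (a : ℕ → ℕ) (_ : StrictMono a) (_ : 1 ≤ a 0), seqEntropyOn f Y a

/-- `h_∞(f)`: the supremum of the topological sequence entropies of `f`. -/
noncomputable def supSeqEntropy {X : Type*} [TopologicalSpace X] (f : X → X) : ℝ≥0∞ :=
  supSeqEntropyOn f Set.univ

/-- The ω-limit set `ω_f(x) = ⋂_n closure {f^k(x) : k ≥ n}`. -/
def omegaLimitSet {X : Type*} [TopologicalSpace X] (f : X → X) (x : X) : Set X :=
  ⋂ n : ℕ, closure ((fun k => f^[k] x) '' Set.Ici n)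

/-- `ω(f) = ⋃_x ω_f(x)`. -/
def omegaSet {X : Type*} [TopologicalSpace X] (f : X → X) : Set X :=
  ⋃ x : X, omegaLimitSet f x

/-- The non-wandering set `Ω(f)`. -/
def nonWanderingSet {X : Type*} [TopologicalSpace X] (f : X → X) : Set X :=
  { x | ∀ U : Set X, IsOpen U → x ∈ U → ∃ n, 1 ≤ n ∧ (f^[n] ⁻¹' U ∩ U).Nonempty }

/-- There is an ε-chain from `x` to `y` under `f`. -/
def EpsChain {X : Type*} [MetricSpace X] (f : X → X) (ε : ℝ) (x y : X) : Prop :=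
  ∃ n, 1 ≤ n ∧ ∃ c : ℕ → X, c 0 = x ∧ c n = y ∧ ∀ i < n, dist (f (c i)) (c (i + 1)) < ε

/-- The chain recurrent set `CR(f)`. -/
def chainRecurrentSet {X : Type*} [MetricSpace X] (f : X → X) : Set X :=
  { x | ∀ ε > 0, EpsChain f ε x x }

/-- The chain recurrent set of the restriction `f|_Y`: chain recurrence witnessed by
ε-chains lying entirely inside `Y`. -/
def chainRecurrentSetOn {X : Type*} [MetricSpace X] (f : X → X) (Y : Set X) : Set X :=
  { x ∈ Y | ∀ ε > 0, ∃ n, 1 ≤ n ∧ ∃ c : ℕ → X, c 0 = x ∧ c n = x ∧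
      (∀ i ≤ n, c i ∈ Y) ∧ ∀ i < n, dist (f (c i)) (c (i + 1)) < ε }

/-- `I` is a periodic arc of `f` of period `s`: an arc with `f^s(I) ⊆ I` whose iterates
`I, f(I), …, f^{s-1}(I)` are pairwise disjoint. -/
def IsPeriodicArc {X : Type*} [TopologicalSpace X] (f : X → X) (I : Set X) (s : ℕ) : Prop :=
  IsArc I ∧ 1 ≤ s ∧ Set.MapsTo f^[s] I I ∧
    ∀ i j, i < j → j < s → Disjoint (f^[i] '' I) (f^[j] '' I)

/-- `Orb_f(I) = I ∪ f(I) ∪ … ∪ f^{s-1}(I)`. -/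
def arcOrbit {X : Type*} (f : X → X) (I : Set X) (s : ℕ) : Set X :=
  ⋃ i ∈ Finset.range s, f^[i] '' I

/-- `I` is an independence set for the pair `(U, V)` under `f`. -/
def IsIndepSetPair {X : Type*} (f : X → X) (U V : Set X) (I : Finset ℕ) : Prop :=
  ∀ J ⊆ I, J.Nonempty → ∀ s : ℕ → Bool,
    (⋂ j ∈ J, f^[j] ⁻¹' (if s j then U else V)).Nonempty

/-- `(x, y)` is an IN-pair of `(X, f)`. -/
def INPair {X : Type*} [TopologicalSpace X] (f : X → X) (x y : X) : Prop :=
  ∀ U ∈ nhds x, ∀ V ∈ nhds y, ∀ m : ℕ, ∃ I : Finset ℕ, m ≤ I.card ∧ IsIndepSetPair f U V I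

/-- The set `IN(X, f)` of IN-pairs of `(X, f)`. -/
def INPairs {X : Type*} [TopologicalSpace X] (f : X → X) : Set (X × X) :=
  { p | INPair f p.1 p.2 }

/-- `(x, y)` is an IN-pair of the restricted (sub)system `(Y, f|_Y)`, for `Y` invariant. -/
def INPairOn {X : Type*} [TopologicalSpace X] (f : X → X) (Y : Set X) (x y : X) : Prop :=
  x ∈ Y ∧ y ∈ Y ∧ ∀ U ∈ nhds x, ∀ V ∈ nhds y, ∀ m : ℕ, ∃ I : Finset ℕ, m ≤ I.card ∧
    ∀ J ⊆ I, J.Nonempty → ∀ s : ℕ → Bool,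
      (Y ∩ ⋂ j ∈ J, f^[j] ⁻¹' (if s j then U else V)).Nonempty

/-- `(x, y)` is a Li–Yorke pair for `f`. -/
def LiYorkePair {X : Type*} [MetricSpace X] (f : X → X) (x y : X) : Prop :=
  Filter.liminf (fun n : ℕ => dist (f^[n] x) (f^[n] y)) Filter.atTop = 0 ∧
    0 < Filter.limsup (fun n : ℕ => dist (f^[n] x) (f^[n] y)) Filter.atTop

section Bb
set_option linter.unusedSectionVars false

def seg {X : Type*} [TopologicalSpace X] (x y : X) : Set X :=
  ⋂₀ {C | IsPreconnected C ∧ x ∈ C ∧ y ∈ C}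

class TA (X : Type*) [MetricSpace X] : Prop extends CompactSpace X, ConnectedSpace X,
    LocallyConnectedSpace X where
  segp : ∀ x y : X, IsPreconnected (seg x y)
  segc : ∀ x y : X, IsClosed (seg x y)
  finx : ∃ N : ℕ, ∀ P : Set X, IsPreconnected P → P.Nonempty → ∀ p : Fin (N+1) → X,
    (∀ i, p i ∉ P) → ∃ i j, i ≠ j ∧ Disjoint (seg (p i) (p j)) P

section SEG
variable {X : Type*} [MetricSpace X]

theorem left_seg (x y : X) : x ∈ seg x y := fun _ h => h.2.1
theorem right_seg (x y : X) : y ∈ seg x y := fun _ h => h.2.2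
theorem seg_sub {x y : X} {C : Set X} (h : IsPreconnected C) (hx : x ∈ C) (hy : y ∈ C) :
    seg x y ⊆ C := fun _ hz => hz C ⟨h, hx, hy⟩
theorem seg_comm (x y : X) : seg x y = seg y x := by
  unfold seg; congr 1; ext C; simp only [mem_ofPred_eq]; tauto
theorem seg_self (x : X) : seg x x = {x} :=
  Subset.antisymm (seg_sub isPreconnected_singleton rfl rfl) (by simpa using left_seg x x)

variable [TA X]
theorem segP (x y : X) : IsPreconnected (seg x y) := TA.segp x y
theorem segC (x y : X) : IsClosed (seg x y) := TA.segc x y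
theorem seg_sub_seg {x y u v : X} (hu : u ∈ seg x y) (hv : v ∈ seg x y) : seg u v ⊆ seg x y :=
  seg_sub (segP x y) hu hv
theorem seg_sub_union (x y z : X) : seg x z ⊆ seg x y ∪ seg y z :=
  seg_sub (IsPreconnected.union y (right_seg _ _) (left_seg _ _) (segP _ _) (segP _ _))
    (Or.inl (left_seg _ _)) (Or.inr (right_seg _ _))
theorem seg_union {x y z : X} (h : z ∈ seg x y) : seg x y = seg x z ∪ seg z y :=
  Subset.antisymm (seg_sub_union x z y) (union_subset (seg_sub_seg (left_seg _ _) h)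
    (seg_sub_seg h (right_seg _ _)))

theorem pre_of_seg {C : Set X} (h : ∀ x ∈ C, ∀ y ∈ C, seg x y ⊆ C) : IsPreconnected C :=
  isPreconnected_of_forall_pair fun x hx y hy => ⟨seg x y, h x hx y hy, left_seg _ _,
    right_seg _ _, segP _ _⟩

theorem pre_inter {C D : Set X} (hC : IsPreconnected C) (hD : IsPreconnected D) :
    IsPreconnected (C ∩ D) :=
  pre_of_seg fun _ hx _ hy => subset_inter (seg_sub hC hx.1 hy.1) (seg_sub hD hx.2 hy.2)

theorem eq_of_pre_pair {x y : X} {C : Set X} (hC : IsPreconnected C) (hx : x ∈ C) (hy : y ∈ C)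
    (hf : C.Finite) : x = y := by
  by_contra h
  exact (hC.infinite_of_nontrivial ⟨x, hx, y, hy, h⟩) hf

/-- component of the complement -/
abbrev ccp (S : Set X) (x : X) : Set X := connectedComponentIn Sᶜ x

theorem cmp_open {S : Set X} (hS : IsClosed S) (x : X) : IsOpen (ccp S x) :=
  hS.isOpen_compl.connectedComponentIn

theorem cmp_clos {S : Set X} (x y : X) (hx : x ∉ S)
    (hy : y ∈ closure (ccp S x)) (hyS : y ∉ S) : y ∈ ccp S x := by
  have h1 : IsPreconnected (insert y (ccp S x)) :=
    (isPreconnected_connectedComponentIn).subset_closure (subset_insert _ _)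
      (insert_subset hy subset_closure)
  have : insert y (ccp S x) ⊆ ccp S x :=
    h1.subset_connectedComponentIn (mem_insert_of_mem _ (mem_connectedComponentIn hx))
      (insert_subset hyS (connectedComponentIn_subset _ _))
  exact this (mem_insert _ _)

theorem mem_cmp_iff {S : Set X} {x y : X} (hx : x ∉ S) :
    y ∈ ccp S x ↔ Disjoint (seg x y) S := by
  constructor
  · intro h
    exact (disjoint_compl_left).mono_left ((seg_sub isPreconnected_connectedComponentIn
      (mem_connectedComponentIn hx) h).trans (connectedComponentIn_subset _ _))
  · intro h
    exact (segP x y).subset_connectedComponentIn (left_seg _ _)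
      h.subset_compl_right (right_seg _ _)

theorem clos_cmp_meets {S : Set X} (hS : IsClosed S) (hn : S.Nonempty) {x : X} (hx : x ∉ S) :
    ∃ d ∈ S, d ∈ closure (ccp S x) := by
  by_contra h
  push Not at h
  have hc : IsClosed (ccp S x) := by
    rw [← closure_subset_iff_isClosed]
    intro y hy
    exact cmp_clos x y hx hy fun hyS => h y hyS hy
  have := IsClopen.eq_univ ⟨hc, cmp_open hS x⟩ ⟨x, mem_connectedComponentIn hx⟩
  obtain ⟨s, hs⟩ := hn
  have h2 : s ∈ ccp S x := by rw [this]; trivial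
  exact connectedComponentIn_subset _ _ h2 hs

theorem seg_anti {d u w : X} (h1 : u ∈ seg d w) (h2 : w ∈ seg d u) : u = w := by
  by_contra hne
  by_cases hd : d = u
  · subst hd; rw [seg_self] at h2; exact hne h2.symm
  have hd' : d ∉ ({u} : Set X) := hd
  obtain ⟨e, he, hcl⟩ := clos_cmp_meets (isClosed_singleton (x := u)) ⟨u, rfl⟩ hd'
  rw [mem_singleton_iff] at he; subst he
  have hp : IsPreconnected (insert e (ccp {e} d)) :=
    (isPreconnected_connectedComponentIn).subset_closure (subset_insert _ _)
      (insert_subset hcl subset_closure)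
  have := seg_sub hp (mem_insert_of_mem _ (mem_connectedComponentIn hd')) (mem_insert _ _) h2
  rcases this with h | h
  · exact hne h.symm
  · exact disjoint_left.1 ((mem_cmp_iff hd').1 h) h1 rfl

theorem seg_meet {d a u w : X} (h : u ∈ seg d a) (h1 : w ∈ seg d u) (h2 : w ∈ seg u a) :
    w = u := by
  have hw : w ∈ seg d a := seg_sub_seg (left_seg _ _) h h1
  have := h; rw [seg_union hw] at this
  rcases this with h3 | h3
  · exact (seg_anti h3 h1).symm
  · rw [seg_comm] at h2 h3; exact seg_anti h2 h3

theorem seg_lin {d a u v : X} (hu : u ∈ seg d a) (hv : v ∈ seg d a) :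
    u ∈ seg d v ∨ v ∈ seg d u := by
  have h1 := hu; rw [seg_union hv] at h1
  rcases h1 with h1 | h1
  · exact Or.inl h1
  have h2 := hv; rw [seg_union hu] at h2
  rcases h2 with h2 | h2
  · exact Or.inr h2
  rw [seg_comm] at h1 h2
  have := seg_anti h1 h2; subst this; exact Or.inl (right_seg _ _)

theorem seg_trans {d u v w : X} (h1 : v ∈ seg d u) (h2 : u ∈ seg d w) : v ∈ seg d w :=
  seg_sub_seg (left_seg _ _) h2 h1

/-- d ≤ v ≤ u ≤ w gives u in [v,w] -/
theorem seg_btw {d u v w : X} (h1 : v ∈ seg d u) (h2 : u ∈ seg d w) : u ∈ seg v w := by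
  have h3 := h2; rw [seg_union (seg_trans h1 h2)] at h3
  rcases h3 with h3 | h3
  · have := seg_anti h1 h3; subst this; exact left_seg _ _
  · exact h3

theorem open_not_mem_seg (d v : X) : IsOpen {w | v ∉ seg d w} := by
  by_cases hd : d = v
  · subst hd; convert isOpen_empty; ext w; simpa using left_seg d w
  · have : {w | v ∉ seg d w} = ccp {v} d := by
      ext w; rw [mem_cmp_iff (by simpa using hd), disjoint_singleton_right]; rfl
    rw [this]; exact cmp_open isClosed_singleton d

theorem pre_not_mem_seg (d v : X) : IsPreconnected {w | v ∉ seg d w} := by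
  refine pre_of_seg fun x hx y hy z hz hv => ?_
  simp only [mem_ofPred_eq] at hx hy
  have h1 := seg_sub_union x d y hz
  rcases h1 with h1 | h1
  · rw [seg_comm] at h1; exact hx (seg_trans hv h1)
  · exact hy (seg_trans hv h1)

theorem small_seg {O : Set X} (hO : IsOpen O) {d : X} (hd : d ∈ O) :
    ∃ O', IsOpen O' ∧ d ∈ O' ∧ O' ⊆ O ∧ ∀ y ∈ O', ∀ z ∈ O', seg y z ⊆ O' :=
  ⟨connectedComponentIn O d, hO.connectedComponentIn, mem_connectedComponentIn hd,
    connectedComponentIn_subset _ _, fun _ hy _ hz =>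
      seg_sub isPreconnected_connectedComponentIn hy hz⟩

theorem cross_cmp {S C : Set X} (hS : IsClosed S) {x : X} (hx : x ∉ S)
    (hC : IsPreconnected C) (h1 : (C ∩ S).Nonempty) (h2 : (C ∩ ccp S x).Nonempty) :
    ∃ d ∈ C, d ∈ S ∧ d ∈ closure (ccp S x) := by
  obtain ⟨s, hs, hsS⟩ := h1
  by_contra hcon
  push Not at hcon
  obtain ⟨w, -, hw1, hw2⟩ := hC (ccp S x) (closure (ccp S x))ᶜ (cmp_open hS x)
    isClosed_closure.isOpen_compl (by
      intro y hy
      by_cases h : y ∈ closure (ccp S x)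
      · exact Or.inl (cmp_clos x y hx h fun hyS => hcon y hy hyS h)
      · exact Or.inr h) h2 ⟨s, hs, hcon s hs hsS⟩
  exact hw2 (subset_closure hw1)

theorem clos_cmp_unique {S : Set X} (hSp : IsPreconnected S) {x d e : X}
    (hd : d ∈ S) (hd' : d ∈ closure (ccp S x)) (he : e ∈ S) (he' : e ∈ closure (ccp S x)) :
    d = e := by
  have h1 : IsPreconnected (ccp S x ∪ {d, e}) :=
    isPreconnected_connectedComponentIn.subset_closure subset_union_left
      (union_subset subset_closure (by rintro y (rfl | rfl) <;> assumption))
  have h2 : seg d e ⊆ {d, e} := by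
    intro y hy
    rcases seg_sub h1 (by simp) (by simp) hy with h | h
    · exact absurd (seg_sub hSp hd he hy) (connectedComponentIn_subset _ _ h)
    · exact h
  exact eq_of_pre_pair (segP d e) (left_seg _ _) (right_seg _ _) ((by simp : ({d, e} : Set X).Finite).subset h2)

/-- gate -/
theorem gate_cmp {S : Set X} (hS : IsClosed S) (hSp : IsPreconnected S) (hn : S.Nonempty) {x : X}
    (hx : x ∉ S) : ∃ d ∈ S, d ∈ closure (ccp S x) ∧ ∀ C : Set X, IsPreconnected C →
      (C ∩ S).Nonempty → (C ∩ ccp S x).Nonempty → d ∈ C := by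
  obtain ⟨d, hd, hc⟩ := clos_cmp_meets hS hn hx
  refine ⟨d, hd, hc, fun C hC h1 h2 => ?_⟩
  obtain ⟨e, he, he1, he2⟩ := cross_cmp hS hx hC h1 h2
  rwa [clos_cmp_unique hSp hd hc he1 he2]

theorem gate {S : Set X} (hS : IsClosed S) (hSp : IsPreconnected S) (hn : S.Nonempty) (x : X) :
    ∃ w ∈ S, ∀ s ∈ S, w ∈ seg x s := by
  by_cases hx : x ∈ S
  · exact ⟨x, hx, fun s _ => left_seg _ _⟩
  obtain ⟨d, hd, -, h⟩ := gate_cmp hS hSp hn hx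
  exact ⟨d, hd, fun s hs => h _ (segP _ _) ⟨s, right_seg _ _, hs⟩
    ⟨x, left_seg _ _, mem_connectedComponentIn hx⟩⟩

variable (X) in
noncomputable def tN : ℕ := (TA.finx (X := X)).choose

theorem FIN {P : Set X} (hP : IsPreconnected P) (hn : P.Nonempty) (p : ℕ → X)
    (h : ∀ i, p i ∉ P) : ∃ i j, i < j ∧ j ≤ tN X ∧ Disjoint (seg (p i) (p j)) P := by
  obtain ⟨i, j, hij, hd⟩ := (TA.finx (X := X)).choose_spec P hP hn (fun i => p i) (fun i => h i)
  have hi := i.2; have hj := j.2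
  rcases lt_or_gt_of_ne hij with h1 | h1
  · exact ⟨i, j, h1, Nat.lt_succ_iff.1 hj, hd⟩
  · exact ⟨j, i, h1, Nat.lt_succ_iff.1 hi, by rwa [seg_comm]⟩

theorem FIN_finite {P : Set X} (hP : IsPreconnected P) (hn : P.Nonempty) {T : Set X}
    (h : ∀ x ∈ T, x ∉ P) (h2 : ∀ x ∈ T, ∀ y ∈ T, Disjoint (seg x y) P → x = y) : T.Finite := by
  by_contra hT
  have hT' : T.Infinite := hT
  obtain ⟨i, j, hij, -, hd⟩ := FIN hP hn (fun n => (Set.Infinite.natEmbedding T hT' n).1)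
    (fun i => h _ (Set.Infinite.natEmbedding T hT' i).2)
  have := h2 _ (Set.Infinite.natEmbedding T hT' i).2 _ (Set.Infinite.natEmbedding T hT' j).2 hd
  exact hij.ne ((Set.Infinite.natEmbedding T hT').injective (Subtype.ext this))

theorem cmps_finite {S : Set X} (hSp : IsPreconnected S) (hn : S.Nonempty) :
    ((ccp S) '' Sᶜ).Finite := by
  obtain ⟨T, hT, hinj⟩ := exists_subset_bijOn Sᶜ (ccp S)
  rw [← hinj.image_eq]
  refine Finite.image _ (FIN_finite hSp hn hT fun x hx y hy hd => hinj.injOn hx hy ?_)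
  exact connectedComponentIn_eq ((mem_cmp_iff (hT hx)).2 hd)

theorem clos_diff_finite {E : Set X} (hE : IsPreconnected E) : (closure E \ E).Finite := by
  rcases E.eq_empty_or_nonempty with rfl | hn
  · simp
  refine FIN_finite hE hn (fun x hx => hx.2) fun x hx y hy hd => ?_
  have h1 : IsPreconnected (E ∪ {x, y}) := hE.subset_closure subset_union_left
      (union_subset subset_closure (by rintro z (rfl | rfl); exacts [hx.1, hy.1]))
  have h2 : seg x y ⊆ {x, y} := fun z hz =>
    (seg_sub h1 (by simp) (by simp) hz).resolve_left (disjoint_left.1 hd hz)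
  exact eq_of_pre_pair (segP x y) (left_seg _ _) (right_seg _ _)
    ((by simp : ({x, y} : Set X).Finite).subset h2)

theorem seg_acc {d y0 : X} (h : d ≠ y0) {O : Set X} (hO : IsOpen O) (hd : d ∈ O) :
    ∃ y ∈ seg d y0, y ≠ d ∧ y ∈ O := by
  have := (segP d y0).preperfect_of_nontrivial ⟨d, left_seg _ _, y0, right_seg _ _, h⟩ d (left_seg _ _)
  rw [accPt_iff_nhds] at this
  obtain ⟨y, hy, hne⟩ := this O (hO.mem_nhds hd)
  exact ⟨y, hy.2, hne, hy.1⟩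

theorem NB {d y0 : X} (h : d ≠ y0) {O : Set X} (hO : IsOpen O) (hd : d ∈ O) :
    ∃ y ∈ seg d y0, y ≠ d ∧ seg d y ⊆ O ∧ ∀ x, d ∉ seg x y0 → x ∈ seg d y ∨ y ∈ seg d x := by
  set L := seg d y0 with hL
  have hg : ∀ x, ∃ w ∈ L, ∀ s ∈ L, w ∈ seg x s := fun x => gate (segC _ _) (segP _ _)
    ⟨d, left_seg _ _⟩ x
  choose gt hgL hgs using hg
  have hG : (gt '' Lᶜ).Finite := by
    obtain ⟨T, hT, hinj⟩ := exists_subset_bijOn Lᶜ gt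
    rw [← hinj.image_eq]
    refine Finite.image _ (FIN_finite (segP d y0) ⟨d, left_seg _ _⟩ hT fun x hx y hy hd =>
      hinj.injOn hx hy ?_)
    have h1 : gt x ∈ seg y (gt y) := by
      have := hgs x (gt y) (hgL y)
      rcases seg_sub_union x y (gt y) this with h | h
      · exact absurd (hgL x) (disjoint_left.1 hd h)
      · exact h
    exact seg_anti h1 (hgs y _ (hgL x))
  obtain ⟨O', hO', hdO', hsub, hseg⟩ := small_seg (hO.inter
    ((hG.subset (diff_subset (t := {d}))).isClosed.isOpen_compl)) (d := d) ⟨hd, by simp⟩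
  obtain ⟨y, hy, hyd, hyO⟩ := seg_acc h hO' hdO'
  have hyO2 := (hseg d hdO' y hyO).trans hsub
  refine ⟨y, hy, hyd, fun z hz => (hyO2 hz).1, fun x hx => ?_⟩
  by_cases hxL : x ∈ L
  · exact seg_lin hxL hy
  · right
    have hw : gt x ≠ d := fun e => hx (e ▸ hgs x y0 (right_seg _ _))
    have hwx : gt x ∈ seg d x := by rw [seg_comm]; exact hgs x d (left_seg _ _)
    rcases seg_lin (hgL x) hy with h1 | h1
    · exact absurd ⟨mem_image_of_mem _ hxL, hw⟩ (hyO2 h1).2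
    · exact seg_trans h1 hwx
end SEG

end Bb

section Bc
open scoped ENNReal unitInterval

section TREE
variable {X : Type*} [MetricSpace X]

theorem arc_emb {A : Set X} (h : IsArc A) : ∃ j : I → X, IsEmbedding j ∧ range j = A := by
  obtain ⟨e⟩ := h
  refine ⟨fun t => (e.symm t : X), IsEmbedding.subtypeVal.comp e.symm.isEmbedding, ?_⟩
  have : (fun t => (e.symm t : X)) = Subtype.val ∘ e.symm := rfl
  rw [this, range_comp, e.symm.surjective.range_eq, image_univ, Subtype.range_coe]

theorem arc_pre {j : I → X} (hj : IsEmbedding j) {C : Set X} (hC : IsPreconnected C)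
    (hs : C ⊆ range j) {s t : I} (h1 : j s ∈ C) (h2 : j t ∈ C) {u : I} (hu : s ≤ u) (hu' : u ≤ t) :
    j u ∈ C := by
  have : IsPreconnected (j ⁻¹' C) := by
    rw [← hj.isInducing.isPreconnected_image, image_preimage_eq_of_subset hs]; exact hC
  exact this.Icc_subset h1 h2 ⟨hu, hu'⟩

theorem arc_endpt {j : I → X} (hj : IsEmbedding j) {p : X} (h : IsArcEndpoint (range j) p) :
    p = j 0 ∨ p = j 1 := by
  obtain ⟨⟨t, rfl⟩, hc⟩ := h
  by_contra! hcon
  have := arc_pre hj hc.isPreconnected diff_subset (s := 0) (t := 1) (u := t)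
    ⟨mem_range_self _, fun e => hcon.1 e.symm⟩ ⟨mem_range_self _, fun e => hcon.2 e.symm⟩
    unitInterval.nonneg' unitInterval.le_one'
  exact this.2 rfl

def AC (Z : Set X) : Prop := ∀ x ∈ Z, ∀ y ∈ Z, x ≠ y → ∃ γ : Path x y, Injective γ ∧
  range γ ⊆ Z ∧ ∀ C ⊆ Z, IsPreconnected C → x ∈ C → y ∈ C → range γ ⊆ C

theorem AC_arc {j : I → X} (hj : IsEmbedding j) : AC (range j) := by
  rintro _ ⟨a, rfl⟩ _ ⟨b, rfl⟩ hab
  have hab' : a ≠ b := fun e => hab (e ▸ rfl)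
  have hmem : ∀ t : I, (1 - (t:ℝ)) * a + t * b ∈ I := fun t => by
    have ht := t.2; have ha := a.2; have hb := b.2
    simp only [mem_Icc] at *
    constructor
    · nlinarith
    · nlinarith
  refine ⟨⟨⟨fun t => j ⟨(1 - (t:ℝ)) * a + t * b, hmem t⟩, ?_⟩, ?_, ?_⟩, ?_, ?_, ?_⟩
  · exact hj.continuous.comp (by fun_prop)
  · simp
  · simp
  · intro s t hst
    have h1 := hj.injective hst
    simp only [Subtype.mk.injEq] at h1
    have h2 : ((s:ℝ) - t) * (b - a) = 0 := by linarith
    rcases mul_eq_zero.1 h2 with h | h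
    · exact Subtype.ext (by linarith)
    · exact absurd (Subtype.ext (by linarith)) hab'
  · rintro _ ⟨t, rfl⟩; exact mem_range_self _
  · rintro C hCs hC h1 h2 _ ⟨t, rfl⟩
    have ht := t.2
    simp only [mem_Icc] at ht
    rcases le_total a b with h | h
    · refine arc_pre hj hC hCs h1 h2 ?_ ?_ <;> rw [← Subtype.coe_le_coe] at * <;> simp only <;> nlinarith
    · refine arc_pre hj hC hCs h2 h1 ?_ ?_ <;> rw [← Subtype.coe_le_coe] at * <;> simp only <;> nlinarith

theorem trans_inj {x p y : X} (γ : Path x p) (δ : Path p y) (hγ : Injective γ) (hδ : Injective δ)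
    (h : ∀ s t, γ s = δ t → (s = 1 ∧ t = 0) ∨ (s = 0 ∧ t = 1)) {a b : I} (hab : (γ.trans δ) a = (γ.trans δ) b) :
    a = b ∨ (a = 0 ∧ b = 1 ∧ x = y) ∨ (a = 1 ∧ b = 0 ∧ x = y) := by
  have key : ∀ a b : I, (γ.trans δ) a = (γ.trans δ) b → a ≤ b → a = b ∨ (a = 0 ∧ b = 1 ∧ x = y) := by
    intro a b hab hle
    rw [← Subtype.coe_le_coe] at hle
    rw [Path.trans_apply, Path.trans_apply] at hab
    split_ifs at hab with h1 h2 h2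
    · have := Subtype.ext_iff.1 (hγ hab); simp only at this
      exact Or.inl (Subtype.ext (by linarith))
    · rcases h _ _ hab with ⟨h3, h4⟩ | ⟨h3, h4⟩
      · rw [Subtype.ext_iff] at h3 h4; simp at h3 h4
        exact Or.inl (Subtype.ext (by linarith))
      · rw [h3, h4] at hab
        rw [Subtype.ext_iff] at h3 h4; simp at h3 h4
        right
        exact ⟨Subtype.ext (by simpa using h3), Subtype.ext (by show (b:ℝ) = 1; linarith), by simpa using hab⟩
    · linarith
    · have := Subtype.ext_iff.1 (hδ hab); simp only at this
      exact Or.inl (Subtype.ext (by linarith))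
  rcases le_total a b with hle | hle
  · rcases key a b hab hle with h | h
    · exact Or.inl h
    · exact Or.inr (Or.inl h)
  · rcases key b a hab.symm hle with h | ⟨h1, h2, h3⟩
    · exact Or.inl h.symm
    · exact Or.inr (Or.inr ⟨h2, h1, h3⟩)

theorem glue_pre {Z1 Z2 C : Set X} {p : X} (h1 : IsClosed Z1) (h2 : IsClosed Z2)
    (hp : Z1 ∩ Z2 = {p}) (hC : IsPreconnected C) (hs : C ⊆ Z1 ∪ Z2) : IsPreconnected (C ∩ Z1) := by
  rw [isPreconnected_closed_iff]
  by_contra! hcon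
  obtain ⟨t, t', ht, ht', hsub, hn, hn', he⟩ := hcon
  have key : ∀ t t' : Set X, IsClosed t → IsClosed t' → C ∩ Z1 ⊆ t ∪ t' → (C ∩ Z1 ∩ t).Nonempty →
      (C ∩ Z1 ∩ t').Nonempty → ¬ (p ∈ C ∧ p ∈ t') → (C ∩ Z1 ∩ (t ∩ t')).Nonempty := by
    rintro t t' ht ht' hsub ⟨a, ha⟩ ⟨b, hb⟩ hpt
    obtain ⟨w, hw, hw1, hw2⟩ := isPreconnected_closed_iff.1 hC ((Z1 ∩ t) ∪ Z2) (Z1 ∩ t')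
      ((h1.inter ht).union h2) (h1.inter ht') (by
        intro y hy
        rcases hs hy with h | h
        · rcases hsub ⟨hy, h⟩ with h' | h'
          · exact Or.inl (Or.inl ⟨h, h'⟩)
          · exact Or.inr ⟨h, h'⟩
        · exact Or.inl (Or.inr h)) ⟨a, ha.1.1, Or.inl ⟨ha.1.2, ha.2⟩⟩ ⟨b, hb.1.1, hb.1.2, hb.2⟩
    rcases hw1 with h | h
    · exact ⟨w, ⟨hw, hw2.1⟩, h.2, hw2.2⟩
    · have : w ∈ Z1 ∩ Z2 := ⟨hw2.1, h⟩
      rw [hp, mem_singleton_iff] at this; subst this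
      exact absurd ⟨hw, hw2.2⟩ hpt
  have hp1 : p ∈ Z1 := (by rw [hp]; rfl : p ∈ Z1 ∩ Z2).1
  by_cases hpt : p ∈ C ∧ p ∈ t'
  · have := key t' t ht' ht (by rwa [union_comm]) hn' hn (fun h => by
      have : p ∈ C ∩ Z1 ∩ (t ∩ t') := ⟨⟨h.1, hp1⟩, h.2, hpt.2⟩
      rw [he] at this; exact this)
    rw [inter_comm t' t, he] at this; exact not_nonempty_empty this
  · have := key t t' ht ht' hsub hn hn' hpt
    rw [he] at this; exact not_nonempty_empty this

theorem AC_glue {Z1 Z2 : Set X} {p : X} (h1 : IsClosed Z1) (h2 : IsClosed Z2)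
    (hp : Z1 ∩ Z2 = {p}) (a1 : AC Z1) (a2 : AC Z2) : AC (Z1 ∪ Z2) := by
  have same : ∀ Z1 Z2 : Set X, IsClosed Z1 → IsClosed Z2 → Z1 ∩ Z2 = {p} → AC Z1 → ∀ x ∈ Z1, ∀ y ∈ Z1,
      x ≠ y → ∃ γ : Path x y, Injective γ ∧
      range γ ⊆ Z1 ∪ Z2 ∧ ∀ C ⊆ Z1 ∪ Z2, IsPreconnected C → x ∈ C → y ∈ C → range γ ⊆ C := by
    intro Z1 Z2 h1 h2 hp a1 x hx y hy hxy
    obtain ⟨γ, hi, hr, hC⟩ := a1 x hx y hy hxy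
    exact ⟨γ, hi, hr.trans subset_union_left, fun C hCs hCp hx' hy' =>
      (hC (C ∩ Z1) inter_subset_right (glue_pre h1 h2 hp hCp hCs) ⟨hx', hx⟩ ⟨hy', hy⟩).trans
        inter_subset_left⟩
  have diff : ∀ Z1 Z2 : Set X, IsClosed Z1 → IsClosed Z2 → Z1 ∩ Z2 = {p} → AC Z1 → AC Z2 →
      ∀ x ∈ Z1, ∀ y ∈ Z2, x ∉ Z2 → y ∉ Z1 → ∃ γ : Path x y, Injective γ ∧
      range γ ⊆ Z1 ∪ Z2 ∧ ∀ C ⊆ Z1 ∪ Z2, IsPreconnected C → x ∈ C → y ∈ C → range γ ⊆ C := by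
    intro Z1 Z2 h1 h2 hp a1 a2 x hx y hy hx2 hy1
    have hpm : p ∈ Z1 ∩ Z2 := by rw [hp]; rfl
    obtain ⟨γ, hi, hr, hC⟩ := a1 x hx p hpm.1 (fun e => hx2 (e ▸ hpm.2))
    obtain ⟨δ, hi', hr', hC'⟩ := a2 p hpm.2 y hy (fun e => hy1 (e ▸ hpm.1))
    refine ⟨γ.trans δ, ?_, ?_, ?_⟩
    · intro a b hab
      have hh : ∀ s t, γ s = δ t → (s = 1 ∧ t = 0) ∨ (s = 0 ∧ t = 1) := by
        intro s t hst
        left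
        have : γ s ∈ Z1 ∩ Z2 := ⟨hr (mem_range_self _), hst ▸ hr' (mem_range_self _)⟩
        rw [hp, mem_singleton_iff] at this
        exact ⟨hi (by rw [this, γ.target]), hi' (by rw [← hst, this, δ.source])⟩
      rcases trans_inj γ δ hi hi' hh hab with h | ⟨-, -, h⟩ | ⟨-, -, h⟩
      · exact h
      · exact absurd hy (h ▸ hx2)
      · exact absurd hy (h ▸ hx2)
    · rw [Path.trans_range]; exact union_subset_union hr hr'
    · intro C hCs hCp hxC hyC
      obtain ⟨w, hw, hw2⟩ := isPreconnected_closed_iff.1 hCp Z1 Z2 h1 h2 hCs ⟨x, hxC, hx⟩ ⟨y, hyC, hy⟩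
      rw [hp, mem_singleton_iff] at hw2; subst hw2
      rw [Path.trans_range]
      refine union_subset ?_ ?_
      · exact (hC (C ∩ Z1) inter_subset_right (glue_pre h1 h2 hp hCp hCs) ⟨hxC, hx⟩ ⟨hw, hpm.1⟩).trans
          inter_subset_left
      · exact (hC' (C ∩ Z2) inter_subset_right (glue_pre h2 h1 (by rwa [inter_comm]) hCp
          (by rwa [union_comm])) ⟨hw, hpm.2⟩ ⟨hyC, hy⟩).trans inter_subset_left
  intro x hx y hy hxy
  by_cases hx1 : x ∈ Z1
  · by_cases hy1 : y ∈ Z1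
    · exact same Z1 Z2 h1 h2 hp a1 x hx1 y hy1 hxy
    · have hy2 := hy.resolve_left hy1
      by_cases hx2 : x ∈ Z2
      · have := same Z2 Z1 h2 h1 (by rwa [inter_comm]) a2 x hx2 y hy2 hxy
        rwa [union_comm] at this
      · exact diff Z1 Z2 h1 h2 hp a1 a2 x hx1 y hy2 hx2 hy1
  · have hx2 := hx.resolve_left hx1
    by_cases hy2 : y ∈ Z2
    · have := same Z2 Z1 h2 h1 (by rwa [inter_comm]) a2 x hx2 y hy2 hxy
      rwa [union_comm] at this
    · have := diff Z2 Z1 h2 h1 (by rwa [inter_comm]) a2 a1 x hx2 y (hy.resolve_right hy2) hx1 hy2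
      rwa [union_comm] at this

noncomputable def circI (t : I) : Metric.sphere (0:ℂ) 1 :=
  ⟨Complex.exp ((2 * Real.pi * (t:ℝ) : ℝ) * Complex.I), by
    rw [mem_sphere_zero_iff_norm]; exact Complex.norm_exp_ofReal_mul_I _⟩

theorem circI_cont : Continuous circI := by unfold circI; fun_prop

theorem circI_surj : Surjective circI := by
  rintro ⟨z, hz⟩
  rw [mem_sphere_zero_iff_norm] at hz
  have h1 := Complex.norm_mul_exp_arg_mul_I z
  rw [hz] at h1; simp only [Complex.ofReal_one, one_mul] at h1
  have h2 := Complex.neg_pi_lt_arg z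
  have h3 := Complex.arg_le_pi z
  have hpi := Real.pi_pos
  by_cases h : 0 ≤ z.arg
  · refine ⟨⟨z.arg / (2 * Real.pi), by positivity, by rw [div_le_one (by positivity)]; linarith⟩, ?_⟩
    apply Subtype.ext
    simp only [circI]
    rw [mul_div_cancel₀ _ (by positivity)]; exact h1
  · refine ⟨⟨(z.arg + 2 * Real.pi) / (2 * Real.pi), by apply div_nonneg <;> linarith,
      by rw [div_le_one (by positivity)]; linarith⟩, ?_⟩
    apply Subtype.ext
    simp only [circI]
    rw [mul_div_cancel₀ _ (by positivity)]
    push_cast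
    rw [add_mul, Complex.exp_add, Complex.exp_two_pi_mul_I, mul_one]; exact h1

theorem circI_inj {s t : I} (h : circI s = circI t) : s = t ∨ (s = 0 ∧ t = 1) ∨ (s = 1 ∧ t = 0) := by
  have h1 := Subtype.ext_iff.1 h
  simp only [circI] at h1
  obtain ⟨n, hn⟩ := Complex.exp_eq_exp_iff_exists_int.1 h1
  have h2 : (2 * Real.pi * (s:ℝ)) = 2 * Real.pi * t + n * (2 * Real.pi) := by
    have := congrArg Complex.im hn
    simpa using this
  have h3 : (s:ℝ) = t + n := by
    have hpi := Real.pi_pos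
    have : 2 * Real.pi * ((s:ℝ) - t - n) = 0 := by linarith
    rcases mul_eq_zero.1 this with h | h
    · linarith
    · linarith
  have hs := s.2; have ht := t.2
  simp only [mem_Icc] at hs ht
  have hn1 : n ≤ 1 := by
    have : (n:ℝ) ≤ 1 := by linarith
    exact_mod_cast this
  have hn2 : -1 ≤ n := by
    have : (-1:ℝ) ≤ n := by linarith
    exact_mod_cast this
  obtain rfl | rfl | rfl : n = -1 ∨ n = 0 ∨ n = 1 := by omega
  · right; left; push_cast at h3
    exact ⟨Subtype.ext (by show (s:ℝ) = 0; linarith), Subtype.ext (by show (t:ℝ) = 1; linarith)⟩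
  · left; push_cast at h3; exact Subtype.ext (by linarith)
  · right; right; push_cast at h3
    exact ⟨Subtype.ext (by show (s:ℝ) = 1; linarith), Subtype.ext (by show (t:ℝ) = 0; linarith)⟩

theorem scc_of_paths {a b : X} (γ : Path a b) (δ : Path b a) (hγ : Injective γ) (hδ : Injective δ)
    (h : ∀ s t, γ s = δ t → (s = 1 ∧ t = 0) ∨ (s = 0 ∧ t = 1)) : ∃ S : Set X, IsSimpleClosedCurve S := by
  have hq : IsQuotientMap (⟨circI, circI_cont⟩ : C(I, Metric.sphere (0:ℂ) 1)) :=
    circI_cont.isClosedMap.isQuotientMap circI_cont circI_surj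
  have hft : FactorsThrough (γ.trans δ).toContinuousMap (⟨circI, circI_cont⟩ : C(I, Metric.sphere (0:ℂ) 1)) := by
    intro s t hst
    rcases circI_inj hst with rfl | ⟨rfl, rfl⟩ | ⟨rfl, rfl⟩
    · rfl
    · simp
    · simp
  set g := hq.lift _ hft with hg
  have hgc : ∀ t, g (circI t) = (γ.trans δ) t := fun t => by
    have := DFunLike.congr_fun (hq.lift_comp _ hft) t
    exact this
  have hinj : Injective g := by
    intro u v huv
    obtain ⟨s, rfl⟩ := circI_surj u
    obtain ⟨t, rfl⟩ := circI_surj v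
    rw [hgc, hgc] at huv
    have h01 : circI 0 = circI 1 := by
      apply Subtype.ext; simp [circI]
    rcases trans_inj γ δ hγ hδ h huv with rfl | ⟨rfl, rfl, -⟩ | ⟨rfl, rfl, -⟩
    · rfl
    · exact h01
    · exact h01.symm
  exact ⟨range g, ⟨(g.continuous.isClosedEmbedding hinj).isEmbedding.toHomeomorph.symm⟩⟩

theorem AC_univ (h : IsTree X) : AC (univ : Set X) := by
  obtain ⟨hcomp, hconn, ⟨𝒜, harc, hun, hint⟩, hscc⟩ := h
  classical
  have hcl : ∀ 𝓑 : Finset (Set X), 𝓑 ⊆ 𝒜 → IsClosed (⋃₀ (𝓑 : Set (Set X))) := by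
    intro 𝓑 hs
    rw [sUnion_eq_biUnion]
    refine 𝓑.finite_toSet.isClosed_biUnion fun A hA => ?_
    obtain ⟨j, hj, rfl⟩ := arc_emb (harc A (hs hA))
    exact (isCompact_range hj.continuous).isClosed
  obtain ⟨x0⟩ : Nonempty X := inferInstance
  have hx0 : x0 ∈ ⋃₀ (𝒜 : Set (Set X)) := by rw [hun]; trivial
  obtain ⟨A0, hA0, hxA0⟩ := hx0
  have key : ∀ k, k < 𝒜.card → ∃ 𝓑 ⊆ 𝒜, 𝓑.card = k + 1 ∧ AC (⋃₀ (𝓑 : Set (Set X))) := by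
    intro k
    induction k with
    | zero =>
      intro _
      refine ⟨{A0}, by simpa using hA0, by simp, ?_⟩
      obtain ⟨j, hj, rfl⟩ := arc_emb (harc A0 hA0)
      simpa using AC_arc hj
    | succ k ih =>
      intro hk
      obtain ⟨𝓑, hs, hcard, hAC⟩ := ih (by omega)
      have hZ := hcl 𝓑 hs
      have hW := hcl (𝒜 \ 𝓑) Finset.sdiff_subset
      have hne : 𝓑.Nonempty := by rw [← Finset.card_pos]; omega
      have hne' : (𝒜 \ 𝓑).Nonempty := by
        rw [← Finset.card_pos, Finset.card_sdiff_of_subset hs]; omega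
      have hnon : ∀ A ∈ 𝒜, A.Nonempty := fun A hA => by
        obtain ⟨j, hj, rfl⟩ := arc_emb (harc A hA); exact ⟨j 0, mem_range_self _⟩
      obtain ⟨B, hB⟩ := hne
      obtain ⟨B', hB'⟩ := hne'
      obtain ⟨b, hb⟩ := hnon B (hs hB)
      obtain ⟨b', hb'⟩ := hnon B' (Finset.sdiff_subset hB')
      obtain ⟨p, -, hp1, A, hA, hpA⟩ := isPreconnected_closed_iff.1 (isPreconnected_univ (α := X)) _ _ hZ hW (by
          intro y _
          have : y ∈ ⋃₀ (𝒜 : Set (Set X)) := by rw [hun]; trivial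
          obtain ⟨C, hC, hyC⟩ := this
          by_cases hCB : C ∈ 𝓑
          · exact Or.inl ⟨C, hCB, hyC⟩
          · exact Or.inr ⟨C, by simpa using ⟨hC, hCB⟩, hyC⟩) ⟨b, trivial, B, hB, hb⟩ ⟨b', trivial, B', hB', hb'⟩
      have hA' := Finset.mem_sdiff.1 (Finset.mem_coe.1 hA)
      obtain ⟨j, hj, rfl⟩ := arc_emb (harc A hA'.1)
      have hend : ∀ q ∈ range j, q ∈ ⋃₀ (𝓑 : Set (Set X)) → q = j 0 ∨ q = j 1 := by
        rintro q hq ⟨C, hC, hqC⟩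
        refine arc_endpt hj (hint _ hA'.1 C (hs hC) ?_ q ⟨hq, hqC⟩).1
        rintro rfl; exact hA'.2 hC
      have h01 : (0 : I) ≠ 1 := zero_ne_one
      have hsing : ⋃₀ (𝓑 : Set (Set X)) ∩ range j = {p} := by
        refine Subset.antisymm ?_ (singleton_subset_iff.2 ⟨hp1, hpA⟩)
        rintro q ⟨hq1, hq2⟩
        by_contra hqp
        have hqp' : q ≠ p := hqp
        have hj01 : j 0 ∈ ⋃₀ (𝓑 : Set (Set X)) ∧ j 1 ∈ ⋃₀ (𝓑 : Set (Set X)) := by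
          rcases hend p hpA hp1 with h | h <;> rcases hend q hq2 hq1 with h' | h'
          · exact absurd (h'.trans h.symm) hqp'
          · exact ⟨h ▸ hp1, h' ▸ hq1⟩
          · exact ⟨h' ▸ hq1, h ▸ hp1⟩
          · exact absurd (h'.trans h.symm) hqp'
        obtain ⟨δ, hδ, hr, -⟩ := hAC _ hj01.2 _ hj01.1 (fun e => h01 (hj.injective e).symm)
        obtain ⟨S, hS⟩ := scc_of_paths (⟨⟨j, hj.continuous⟩, rfl, rfl⟩ : Path (j 0) (j 1)) δ
          hj.injective hδ (by
            intro s t hst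
            have hst' : j s = δ t := hst
            rcases hend (j s) (mem_range_self _) (hst' ▸ hr (mem_range_self _)) with h | h
            · right; exact ⟨hj.injective h, hδ (by rw [← hst', h, δ.target])⟩
            · left; exact ⟨hj.injective h, hδ (by rw [← hst', h, δ.source])⟩)
        exact hscc S hS
      refine ⟨insert (range j) 𝓑, Finset.insert_subset hA'.1 hs, by
        rw [Finset.card_insert_of_notMem hA'.2, hcard], ?_⟩
      rw [Finset.coe_insert, sUnion_insert, union_comm]
      exact AC_glue hZ (isCompact_range hj.continuous).isClosed hsing hAC (AC_arc hj)
  have hpos : 0 < 𝒜.card := Finset.card_pos.2 ⟨A0, hA0⟩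
  obtain ⟨𝓑, hs, hc, h⟩ := key (𝒜.card - 1) (by omega)
  have : 𝓑 = 𝒜 := Finset.eq_of_subset_of_card_le hs (by omega)
  rw [this, hun] at h
  exact h

theorem tree_TA (h : IsTree X) : TA X := by
  have hAC := AC_univ h
  obtain ⟨hcomp, hconn, ⟨𝒜, harc, hun, hint⟩, hscc⟩ := h
  have hsegr : ∀ x y : X, IsPreconnected (seg x y) ∧ IsClosed (seg x y) := by
    intro x y
    by_cases hxy : x = y
    · subst hxy; rw [seg_self]; exact ⟨isPreconnected_singleton, isClosed_singleton⟩
    · obtain ⟨γ, -, -, hC⟩ := hAC x trivial y trivial hxy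
      have : seg x y = range γ := by
        refine Subset.antisymm (seg_sub (isPreconnected_range γ.continuous) ⟨0, γ.source⟩ ⟨1, γ.target⟩) ?_
        exact subset_sInter fun C hc => hC C (subset_univ _) hc.1 hc.2.1 hc.2.2
      rw [this]
      exact ⟨isPreconnected_range γ.continuous, (isCompact_range γ.continuous).isClosed⟩
  choose! j hj hjr using fun A (hA : A ∈ 𝒜) => arc_emb (harc A hA)
  have hlc : LocallyConnectedSpace X := by
    haveI : LocallyPathConnectedSpace I := (convex_Icc (0:ℝ) 1).locallyPathConnectedSpace
    let Φ : (Σ A : 𝒜, I) → X := fun p => j p.1 p.2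
    have hc : Continuous Φ := continuous_sigma fun A => (hj A A.2).continuous
    have hsurj : Surjective Φ := by
      intro x
      have : x ∈ ⋃₀ (𝒜 : Set (Set X)) := by rw [hun]; trivial
      obtain ⟨C, hC, hx⟩ := this
      rw [← hjr C hC] at hx
      obtain ⟨t, rfl⟩ := hx
      exact ⟨⟨⟨C, hC⟩, t⟩, rfl⟩
    haveI := (hc.isClosedMap.isQuotientMap hc hsurj).locallyPathConnectedSpace
    infer_instance
  refine { segp := fun x y => (hsegr x y).1, segc := fun x y => (hsegr x y).2, finx := ?_ }
  refine ⟨2 * 𝒜.card, fun P hP hn p hp => ?_⟩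
  classical
  have hex : ∀ i, ∃ A ∈ 𝒜, p i ∈ A := by
    intro i
    have : p i ∈ ⋃₀ (𝒜 : Set (Set X)) := by rw [hun]; trivial
    simpa using this
  choose F hF hpF using hex
  obtain ⟨A, hA, hcard⟩ := Finset.exists_lt_card_fiber_of_mul_lt_card_of_maps_to (s := Finset.univ)
    (t := 𝒜) (f := F) (n := 2) (fun i _ => hF i) (by simp; omega)
  rw [Finset.two_lt_card] at hcard
  obtain ⟨a, ha, b, hb, c, hc, hab, hac, hbc⟩ := hcard
  simp only [Finset.mem_filter, Finset.mem_univ, true_and] at ha hb hc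
  have hpar : ∀ i, F i = A → ∃ t, j A t = p i := by
    intro i hi
    have := hpF i; rw [hi, ← hjr A hA] at this; exact this
  obtain ⟨ta, hta⟩ := hpar a ha
  obtain ⟨tb, htb⟩ := hpar b hb
  obtain ⟨tc, htc⟩ := hpar c hc
  by_contra! hcon
  have hJ := hj A hA
  have hsub : ∀ s t : I, s ≤ t → seg (j A s) (j A t) ⊆ j A '' (Icc s t) := fun s t hst =>
    seg_sub (isPreconnected_Icc.image _ hJ.continuous.continuousOn) (mem_image_of_mem _ ⟨le_rfl, hst⟩)
      (mem_image_of_mem _ ⟨hst, le_rfl⟩)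
  have key : ∀ (i k l : Fin (2 * 𝒜.card + 1)) (s t u : I), i ≠ k → k ≠ l → j A s = p i → j A t = p k → j A u = p l →
      s ≤ t → t ≤ u → False := by
    intro i k l s t u hik hkl h1 h2 h3 hst htu
    obtain ⟨q, hq, hqP⟩ := not_disjoint_iff.1 (hcon i k hik)
    obtain ⟨r, hr, hrP⟩ := not_disjoint_iff.1 (hcon k l hkl)
    rw [← h1, ← h2] at hq
    rw [← h3, ← h2] at hr
    obtain ⟨q', hq', rfl⟩ := hsub _ _ hst hq
    obtain ⟨r', hr', rfl⟩ := hsub _ _ htu hr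
    have hle : q' ≤ r' := hq'.2.trans hr'.1
    have := arc_pre hJ (hsegr (j A q') (j A r')).1 ((hsub _ _ hle).trans (image_subset_range _ _))
      (left_seg _ _) (right_seg _ _) hq'.2 hr'.1
    exact hp k (h2 ▸ seg_sub hP hqP hrP this)
  rcases le_total ta tb with h1 | h1 <;> rcases le_total tb tc with h2 | h2 <;>
    rcases le_total ta tc with h3 | h3
  · exact key a b c ta tb tc hab hbc hta htb htc h1 h2
  · exact key a b c ta tb tc hab hbc hta htb htc h1 h2
  · exact key a c b ta tc tb hac hbc.symm hta htc htb h3 h2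
  · exact key c a b tc ta tb hac.symm hab htc hta htb h3 h1
  · exact key b a c tb ta tc hab.symm hac htb hta htc h1 h3
  · exact key b c a tb tc ta hbc hac.symm htb htc hta h2 h3
  · exact key c b a tc tb ta hbc.symm hab.symm htc htb hta h2 h1
  · exact key c b a tc tb ta hbc.symm hab.symm htc htb hta h2 h1
end TREE

end Bc

section Bd
universe u
def HS {X : Type u} [TopologicalSpace X] (f : X → X) : Prop :=
  ∃ (ι : Type u) (_ : Finite ι) (_ : Nonempty ι) (A : ι → Set X) (Q : ι → Bool → Set X)
    (n : ι → Bool → ℕ) (τ : ι → Bool → ι),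
    (∀ i, (A i).Nonempty) ∧ (∀ i b, IsClosed (Q i b)) ∧ (∀ i b, Q i b ⊆ A i) ∧
    (∀ i b, 1 ≤ n i b) ∧ (∀ i b, A (τ i b) ⊆ f^[n i b] '' Q i b) ∧
    ∀ i, Disjoint (Q i true) (Q i false)

theorem HS_iter {X : Type u} [TopologicalSpace X] {f : X → X} {k : ℕ} (hk : 1 ≤ k)
    (h : HS f^[k]) : HS f := by
  obtain ⟨ι, h1, h2, A, Q, n, τ, h3, h4, h5, h6, h7, h8⟩ := h
  refine ⟨ι, h1, h2, A, Q, fun i b => k * n i b, τ, h3, h4, h5, fun i b => ?_, fun i b => ?_, h8⟩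
  · exact Nat.mul_pos hk (h6 i b)
  · rw [iterate_mul]; exact h7 i b

theorem cov_nonempty {X : Type*} [TopologicalSpace X] (f : X → X) (Y : Set X)
    (hY : ∀ x ∈ Y, ∀ k, f^[k] x ∈ Y) (a : ℕ → ℕ)
    (𝒰 : Finset (Set X)) (hU : IsOpenCoverOn Y 𝒰) (n : ℕ) :
    { m | ∃ c : Fin m → Fin n → Set X, (∀ j i, c j i ∈ 𝒰) ∧
    Y ⊆ ⋃ j, ⋂ i, f^[a i.1] ⁻¹' c j i }.Nonempty := by
  classical
  let e := Fintype.equivFin (Fin n → 𝒰)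
  refine ⟨Fintype.card (Fin n → 𝒰), fun j i => (e.symm j i : Set X), fun j i => (e.symm j i).2, ?_⟩
  intro x hx
  have : ∀ i : Fin n, ∃ U : 𝒰, f^[a i.1] x ∈ (U : Set X) := by
    intro i
    obtain ⟨U, hU1, hU2⟩ := hU.2 (hY x hx (a i.1))
    exact ⟨⟨U, hU1⟩, hU2⟩
  choose g hg using this
  rw [mem_iUnion]
  refine ⟨e g, ?_⟩
  rw [mem_iInter]
  intro i
  simpa using hg i

theorem HS_entropy {X : Type u} [TopologicalSpace X] {f : X → X} (h : HS f) : topEntropy f ≠ 0 := by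
  classical
  obtain ⟨ι, hfin, hne, A, Q, n, τ, hA, hQc, hQA, hn, himg, hdis⟩ := h
  haveI := Fintype.ofFinite ι
  obtain ⟨N0, hN0⟩ : ∃ N0, ∀ i b, n i b ≤ N0 := by
    refine ⟨∑ i, ∑ b, n i b, fun i b => ?_⟩
    exact (Finset.single_le_sum (f := fun b => n i b) (fun _ _ => Nat.zero_le _) (Finset.mem_univ b)).trans
      (Finset.single_le_sum (f := fun i => ∑ b, n i b) (fun _ _ => Nat.zero_le _) (Finset.mem_univ i))
  obtain ⟨i0⟩ := hne
  have hN0pos : 1 ≤ N0 := (hn i0 true).trans (hN0 i0 true)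
  have hdis' : ∀ i b x, x ∈ Q i b → x ∉ Q i (!b) := by
    intro i b x hx
    cases b
    · exact disjoint_right.1 (hdis i) hx
    · exact disjoint_left.1 (hdis i) hx
  have sep : ∀ k i, ∃ S : Finset X, (S : Set X) ⊆ A i ∧ S.card = 2 ^ k ∧ ∀ x ∈ S, ∀ y ∈ S, x ≠ y →
      ∃ T < k * N0, ∃ i b, f^[T] x ∈ Q i b ∧ f^[T] y ∈ Q i (!b) := by
    intro k
    induction k with
    | zero =>
      intro i
      obtain ⟨x, hx⟩ := hA i
      refine ⟨{x}, by simpa using hx, by simp, ?_⟩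
      intro x hx y hy hxy
      simp at hx hy; exact absurd (hx.trans hy.symm) hxy
    | succ k ih =>
      intro i
      choose S hSA hScard hSsep using fun b => ih (τ i b)
      have hpre : ∀ b x, x ∈ S b → ∃ y ∈ Q i b, f^[n i b] y = x := fun b x hx =>
        himg i b (hSA b hx)
      choose! g hg hfg using hpre
      have hinj : ∀ b, Set.InjOn (g b) (S b) := by
        intro b x hx y hy hxy
        rw [← hfg b x hx, ← hfg b y hy, hxy]
      have hmemQ : ∀ b, ∀ x ∈ (S b).image (g b), x ∈ Q i b := by
        intro b x hx
        obtain ⟨y, hy, rfl⟩ := Finset.mem_image.1 hx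
        exact hg b y hy
      have hd : Disjoint ((S true).image (g true)) ((S false).image (g false)) := by
        rw [Finset.disjoint_left]
        intro x hx hx'
        exact disjoint_left.1 (hdis i) (hmemQ _ x hx) (hmemQ _ x hx')
      have hpos : 0 < (k + 1) * N0 := by positivity
      refine ⟨(S true).image (g true) ∪ (S false).image (g false), ?_, ?_, ?_⟩
      · intro x hx
        rw [Finset.mem_coe, Finset.mem_union] at hx
        rcases hx with h | h
        · exact hQA _ _ (hmemQ _ x h)
        · exact hQA _ _ (hmemQ _ x h)
      · rw [Finset.card_union_of_disjoint hd, Finset.card_image_of_injOn (hinj _),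
          Finset.card_image_of_injOn (hinj _), hScard, hScard]; ring
      · have same : ∀ b, ∀ x ∈ (S b).image (g b), ∀ y ∈ (S b).image (g b), x ≠ y →
            ∃ T < (k+1) * N0, ∃ i b, f^[T] x ∈ Q i b ∧ f^[T] y ∈ Q i (!b) := by
          intro b x hx y hy hxy
          obtain ⟨x', hx', rfl⟩ := Finset.mem_image.1 hx
          obtain ⟨y', hy', rfl⟩ := Finset.mem_image.1 hy
          obtain ⟨T, hT, i', b', h1, h2⟩ := hSsep b x' hx' y' hy' (fun e => hxy (e ▸ rfl))
          refine ⟨T + n i b, ?_, i', b', ?_, ?_⟩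
          · have := hN0 i b; rw [add_mul]; omega
          · rw [iterate_add_apply, hfg b x' hx']; exact h1
          · rw [iterate_add_apply, hfg b y' hy']; exact h2
        intro x hx y hy hxy
        rw [Finset.mem_union] at hx hy
        rcases hx with hx | hx <;> rcases hy with hy | hy
        · exact same _ x hx y hy hxy
        · exact ⟨0, hpos, i, true, hmemQ _ x hx, hmemQ _ y hy⟩
        · exact ⟨0, hpos, i, false, hmemQ _ x hx, hmemQ _ y hy⟩
        · exact same _ x hx y hy hxy
  let 𝒰 : Finset (Set X) := Finset.univ.image (fun σ : ι → Bool => ⋂ i, (Q i (σ i))ᶜ)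
  have h𝒰 : IsOpenCoverOn univ 𝒰 := by
    constructor
    · intro U hU
      obtain ⟨σ, -, rfl⟩ := Finset.mem_image.1 hU
      exact isOpen_iInter_of_finite fun i => (hQc i _).isOpen_compl
    · intro x _
      have : ∀ i, ∃ b, x ∉ Q i b := by
        intro i
        by_cases h : x ∈ Q i true
        · exact ⟨false, hdis' i true x h⟩
        · exact ⟨true, h⟩
      choose σ hσ using this
      exact ⟨_, Finset.mem_coe.2 (Finset.mem_image_of_mem _ (Finset.mem_univ σ)), mem_iInter.2 hσ⟩
  have count : ∀ k, 2 ^ k ≤ seqCoverCountOn f univ id 𝒰 (k * N0) := by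
    intro k
    refine le_csInf (cov_nonempty f univ (fun _ _ _ => trivial) id 𝒰 h𝒰 _) ?_
    rintro m ⟨c, hc, hcov⟩
    obtain ⟨S, -, hcard, hsep⟩ := sep k i0
    have : ∀ x, ∃ j, ∀ i : Fin (k * N0), f^[i.1] x ∈ c j i := by
      intro x
      have := hcov (mem_univ x)
      simp only [mem_iUnion, mem_iInter, mem_preimage, id] at this
      exact this
    choose F hF using this
    have hinj : Set.InjOn F S := by
      intro x hx y hy hxy
      by_contra hne
      obtain ⟨T, hT, i, b, h1, h2⟩ := hsep x hx y hy hne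
      have hx1 := hF x ⟨T, hT⟩
      have hy1 := hF y ⟨T, hT⟩
      rw [← hxy] at hy1
      obtain ⟨σ, -, hσ⟩ := Finset.mem_image.1 (hc (F x) ⟨T, hT⟩)
      rw [← hσ, mem_iInter] at hx1 hy1
      have e1 := hx1 i; have e2 := hy1 i
      by_cases hb : σ i = b
      · rw [hb] at e1; exact e1 h1
      · have : σ i = !b := by cases b <;> cases hh : σ i <;> simp_all
        rw [this] at e2; exact e2 h2
    have := Finset.card_le_card_of_injOn (t := Finset.univ) F (fun _ _ => Finset.mem_univ _) hinj
    rwa [hcard, Finset.card_univ, Fintype.card_fin] at this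
  have hlow : ENNReal.ofReal (Real.log 2 / N0) ≤ topEntropy f := by
    unfold topEntropy seqEntropy seqEntropyOn
    refine le_trans ?_ (le_iSup₂ (f := fun (𝒰 : Finset (Set X)) (_ : IsOpenCoverOn univ 𝒰) => _) 𝒰 h𝒰)
    refine Filter.le_limsup_of_frequently_le ?_ (by isBoundedDefault)
    rw [Filter.frequently_atTop]
    intro M
    refine ⟨(M + 1) * N0, by nlinarith, ENNReal.ofReal_le_ofReal ?_⟩
    have h1 := count (M + 1)
    have h2 : Real.log (2 ^ (M + 1) : ℝ) ≤ Real.log (seqCoverCountOn f univ id 𝒰 ((M+1) * N0)) := by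
      apply Real.log_le_log (by positivity)
      exact_mod_cast h1
    rw [Real.log_pow] at h2
    rw [div_le_div_iff₀ (by positivity) (by positivity)]
    push_cast at h2 ⊢
    have : (0:ℝ) < N0 := by positivity
    nlinarith
  intro h0
  rw [h0] at hlow
  have hp : 0 < ENNReal.ofReal (Real.log 2 / N0) := by
    rw [ENNReal.ofReal_pos]
    have : (0:ℝ) < N0 := by positivity
    exact div_pos (Real.log_pos (by norm_num)) this
  exact absurd hlow (not_le.2 hp)

section CRS
variable {X : Type*} [MetricSpace X] [CompactSpace X] {f : X → X}

theorem unif (hf : Continuous f) {ε : ℝ} (hε : 0 < ε) : ∃ δ > 0, ∀ x y, dist x y < δ → dist (f x) (f y) < ε := by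
  have := CompactSpace.uniformContinuous_of_continuous hf
  rw [Metric.uniformContinuous_iff] at this
  obtain ⟨δ, hδ, h⟩ := this ε hε
  exact ⟨δ, hδ, fun x y hxy => h hxy⟩

theorem loop_per {ε : ℝ} {z : X} (h : EpsChain f ε z z) : ∃ n, 1 ≤ n ∧ ∃ c : ℕ → X,
    (∀ i, dist (f (c i)) (c (i+1)) < ε) ∧ (∀ i, c (i + n) = c i) ∧ ∀ m, c (m * n) = z := by
  obtain ⟨n, hn, c, h0, h1, h2⟩ := h
  refine ⟨n, hn, fun i => c (i % n), ?_, fun i => by simp, fun m => by simp [h0]⟩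
  intro i
  have hlt := Nat.mod_lt i hn
  have := h2 (i % n) hlt
  by_cases h : i % n + 1 < n
  · have e : (i + 1) % n = i % n + 1 := by
      rw [Nat.add_mod, Nat.mod_eq_of_lt (a := 1) (by omega), Nat.mod_eq_of_lt h]
    simp only [e]; exact this
  · have e1 : i % n + 1 = n := by omega
    have e : (i + 1) % n = 0 := by
      rw [← Nat.mod_add_mod, e1, Nat.mod_self]
    simp only [e]
    rw [e1, h1] at this; rw [h0]; exact this

theorem chain_fix (hf : Continuous f) {ε : ℝ} (hε : 0 < ε) : ∃ δ > 0, ∀ (x : X) (n : ℕ) (c : ℕ → X), 1 ≤ n →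
    (∀ i < n, dist (f (c i)) (c (i+1)) < δ) → dist x (c 0) < δ → dist (c n) x < δ → EpsChain f ε x x := by
  obtain ⟨δ, hδ, h⟩ := unif hf (show 0 < ε / 3 by linarith)
  refine ⟨min δ (ε / 3), lt_min hδ (by linarith), fun x n c hn hc h0 h1 => ?_⟩
  set c' : ℕ → X := fun i => if i = 0 ∨ i = n then x else c i with hc'
  have hcl : ∀ i, dist (c' i) (c i) < min δ (ε / 3) := by
    intro i
    simp only [hc']
    split_ifs with hi
    · rcases hi with rfl | rfl
      · exact h0
      · rw [dist_comm]; exact h1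
    · rw [dist_self]; exact lt_min hδ (by linarith)
  refine ⟨n, hn, c', by simp [hc'], by simp [hc'], fun i hi => ?_⟩
  have a1 := h _ _ ((hcl i).trans_le (min_le_left _ _))
  have a2 := (hc i hi).trans_le (min_le_right _ _)
  have a3 := (hcl (i+1)).trans_le (min_le_right _ _)
  rw [dist_comm] at a3
  have := dist_triangle4 (f (c' i)) (f (c i)) (c (i+1)) (c' (i+1))
  linarith

theorem CR_closed (hf : Continuous f) : IsClosed (chainRecurrentSet f) := by
  rw [← closure_subset_iff_isClosed]
  intro x hx ε hε
  obtain ⟨δ, hδ, h⟩ := chain_fix hf hε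
  obtain ⟨y, hy, hxy⟩ := Metric.mem_closure_iff.1 hx δ hδ
  obtain ⟨n, hn, c, h0, h1, h2⟩ := hy δ hδ
  exact h x n c hn h2 (by rwa [h0]) (by rwa [h1, dist_comm])

theorem CR_inv (hf : Continuous f) {z : X} (hz : z ∈ chainRecurrentSet f) : f z ∈ chainRecurrentSet f := by
  intro ε hε
  obtain ⟨δ, hδ, h⟩ := chain_fix hf hε
  obtain ⟨n, hn, c, h1, h2, h3⟩ := loop_per (hz δ hδ)
  have h0 : c 0 = z := by simpa using h3 0
  have := h1 0; rw [h0, zero_add] at this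
  refine h (f z) n (fun i => c (i + 1)) hn (fun i _ => h1 (i+1)) this ?_
  have e : c (n + 1) = c 1 := by rw [add_comm, h2]
  show dist (c (n + 1)) (f z) < δ
  rw [e, dist_comm]; exact this

theorem NW_CR (hf : Continuous f) : nonWanderingSet f ⊆ chainRecurrentSet f := by
  intro x hx ε hε
  obtain ⟨δ, hδ, h⟩ := chain_fix hf hε
  obtain ⟨n, hn, y, hy1, hy2⟩ := hx (Metric.ball x δ) Metric.isOpen_ball (Metric.mem_ball_self hδ)
  refine h x n (fun i => f^[i] y) hn (fun i _ => ?_) ?_ ?_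
  · simp only [iterate_succ_apply']; rwa [dist_self]
  · rw [dist_comm]; exact hy2
  · exact hy1

theorem omega_freq {x y : X} (h : y ∈ omegaLimitSet f x) {ε : ℝ} (hε : 0 < ε) (n : ℕ) :
    ∃ k ≥ n, dist (f^[k] x) y < ε := by
  have := mem_iInter.1 h n
  obtain ⟨_, ⟨k, hk, rfl⟩, hd⟩ := Metric.mem_closure_iff.1 this ε hε
  exact ⟨k, hk, by rwa [dist_comm]⟩

theorem omega_CR (hf : Continuous f) : omegaSet f ⊆ chainRecurrentSet f := by
  intro y hy ε hε
  obtain ⟨x, hx⟩ := mem_iUnion.1 hy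
  obtain ⟨δ, hδ, h⟩ := chain_fix hf hε
  obtain ⟨k, -, hk⟩ := omega_freq hx hδ 0
  obtain ⟨l, hl, hl'⟩ := omega_freq hx hδ (k+1)
  refine h y (l - k) (fun i => f^[i + k] x) (by omega) (fun i _ => ?_) ?_ ?_
  · simp only [add_right_comm i 1 k, iterate_succ_apply']; rwa [dist_self]
  · simp only [zero_add]; rwa [dist_comm]
  · rwa [Nat.sub_add_cancel (by omega)]

theorem chain_iter (hf : Continuous f) (k : ℕ) {ε : ℝ} (hε : 0 < ε) : ∃ δ > 0, ∀ c : ℕ → X,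
    (∀ i, dist (f (c i)) (c (i+1)) < δ) → ∀ i, dist (f^[k] (c i)) (c (i+k)) < ε := by
  induction k generalizing ε with
  | zero => exact ⟨1, one_pos, fun c _ i => by simpa using hε⟩
  | succ k ih =>
    obtain ⟨η, hη, h1⟩ := unif hf (half_pos hε)
    obtain ⟨δ, hδ, h2⟩ := ih hη
    refine ⟨min δ (ε/2), lt_min hδ (half_pos hε), fun c hc i => ?_⟩
    have a1 := h1 _ _ (h2 c (fun i => (hc i).trans_le (min_le_left _ _)) i)
    have a2 := (hc (i+k)).trans_le (min_le_right _ _)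
    rw [iterate_succ_apply']
    have := dist_triangle (f (f^[k] (c i))) (f (c (i+k))) (c (i + k + 1))
    rw [← add_assoc]; linarith

theorem CR_iter (hf : Continuous f) {k : ℕ} {z : X} (hz : z ∈ chainRecurrentSet f) :
    z ∈ chainRecurrentSet f^[k] := by
  intro ε hε
  obtain ⟨δ, hδ, h⟩ := chain_iter hf k hε
  obtain ⟨n, hn, c, h1, h2, h3⟩ := loop_per (hz δ hδ)
  refine ⟨n, hn, fun i => c (i * k), by simpa using h3 0, ?_, fun i _ => ?_⟩
  · simp only [mul_comm n k]; exact h3 k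
  · simp only [add_mul, one_mul]; exact h c h1 _

theorem TR (hf : Continuous f) {S : Set X} (hS : IsClosed S) (hm : MapsTo f S (interior S)) {z : X}
    (hz : z ∈ chainRecurrentSet f) (hz1 : f z ∈ interior S) : z ∈ f '' S := by
  have hcomp : IsCompact (f '' S) := hS.isCompact.image hf
  obtain ⟨ε, hε, hth⟩ := (hcomp.union isCompact_singleton).exists_thickening_subset_open isOpen_interior
    (union_subset hm.image_subset (singleton_subset_iff.2 hz1))
  have hin : ∀ x y, (x ∈ S ∨ x = z) → dist (f x) y < ε → y ∈ S := by
    intro x y hx hd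
    refine interior_subset (hth ?_)
    rw [Metric.mem_thickening_iff]
    refine ⟨f x, ?_, by rwa [dist_comm]⟩
    rcases hx with h | rfl
    · exact Or.inl (mem_image_of_mem _ h)
    · exact Or.inr rfl
  have hzS : ∀ ε' > 0, ∃ x ∈ S, dist (f x) z < ε' := by
    intro ε' hε'
    obtain ⟨n, hn, c, h1, h2, h3⟩ := loop_per (hz (min ε ε') (lt_min hε hε'))
    have h0 : c 0 = z := by simpa using h3 0
    have hc : ∀ i, c (i+1) ∈ S := by
      intro i
      induction i with
      | zero => exact hin (c 0) _ (Or.inr h0) ((h1 0).trans_le (min_le_left _ _))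
      | succ i ih => exact hin (c (i+1)) _ (Or.inl ih) ((h1 _).trans_le (min_le_left _ _))
    refine ⟨c (2 * n - 1), ?_, ?_⟩
    · have := hc (2 * n - 2); rwa [show 2 * n - 2 + 1 = 2 * n - 1 by omega] at this
    · have := (h1 (2 * n - 1)).trans_le (min_le_right ε ε')
      rwa [show 2 * n - 1 + 1 = 2 * n by omega, h3 2] at this
  have : z ∈ closure (f '' S) := by
    rw [Metric.mem_closure_iff]
    intro ε' hε'
    obtain ⟨x, hx, hd⟩ := hzS ε' hε'
    exact ⟨f x, mem_image_of_mem _ hx, by rwa [dist_comm]⟩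
  rwa [hcomp.isClosed.closure_eq] at this
end CRS

end Bd

section Be
section HL
universe v
variable {X : Type v} [MetricSpace X] [TA X]

theorem mapsTo_it {g : X → X} {F : Set X} (h : MapsTo g F F) (n : ℕ) : MapsTo g^[n] F F := h.iterate n

theorem lemH_aux {g : X → X} (hg : Continuous g) (hHS : ¬ HS g) {z : X} (hz : z ∈ chainRecurrentSet g)
    {E : Set X} (hE : IsPreconnected E) (hinv : MapsTo g E E) (hgz : g z ∈ E) (hzE : z ∉ E)
    (hmax : ∀ E', E ⊆ E' → IsPreconnected E' → MapsTo g E' E' → z ∉ E' → E' ⊆ E) : False := by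
  have hcont : ∀ n, Continuous g^[n] := fun n => hg.iterate n
  have hinvn : ∀ n, MapsTo g^[n] E E := fun n => hinv.iterate n
  have hzn : ∀ n, 1 ≤ n → g^[n] z ∈ E := by
    intro n hn
    obtain ⟨m, rfl⟩ := Nat.exists_eq_add_of_le' hn
    rw [iterate_add_apply]; exact hinvn m hgz
  -- E1
  have E1 : ∀ A : Set X, IsPreconnected A → (A ∩ E).Nonempty → ¬ A ⊆ E → ∃ n, z ∈ g^[n] '' A := by
    rintro A hA ⟨a, haA, haE⟩ hsub
    by_contra! hcon
    apply hsub
    have hpre : IsPreconnected (E ∪ ⋃ n, g^[n] '' A) := by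
      have : E ∪ ⋃ n, g^[n] '' A = ⋃ n, (E ∪ g^[n] '' A) := (union_iUnion _ _)
      rw [this]
      refine isPreconnected_iUnion ⟨a, mem_iInter.2 fun n => Or.inl haE⟩ fun n => ?_
      exact IsPreconnected.union (g^[n] a) (hinvn n haE) (mem_image_of_mem _ haA) hE
        (hA.image _ (hcont n).continuousOn)
    refine Subset.trans ?_ (hmax _ subset_union_left hpre ?_ ?_)
    · intro x hx; exact Or.inr (mem_iUnion.2 ⟨0, x, hx, rfl⟩)
    · rintro x (hx | hx)
      · exact Or.inl (hinv hx)
      · obtain ⟨n, y, hy, rfl⟩ := mem_iUnion.1 hx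
        exact Or.inr (mem_iUnion.2 ⟨n+1, y, hy, iterate_succ_apply' _ _ _⟩)
    · rintro (h | h)
      · exact hzE h
      · obtain ⟨n, hn⟩ := mem_iUnion.1 h; exact hcon n hn
  have E2 : ∀ s ∈ closure E \ E, ∃ n, g^[n] s = z := by
    rintro s ⟨hs, hsE⟩
    obtain ⟨n, w, hw, e⟩ := E1 (insert s E) (hE.subset_closure (subset_insert _ _)
      (insert_subset hs subset_closure)) ⟨g z, mem_insert_of_mem _ hgz, hgz⟩
      (fun h => hsE (h (mem_insert _ _)))
    rcases hw with rfl | hw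
    · exact ⟨n, e⟩
    · exact absurd (e ▸ hinvn n hw) hzE
  obtain ⟨M, hM1, hM⟩ : ∃ M, 1 ≤ M ∧ MapsTo g^[M] (closure E) E := by
    choose! nn hnn using E2
    have hfin := clos_diff_finite hE
    obtain ⟨B, hB⟩ := (hfin.image nn).bddAbove
    refine ⟨B + 1, by omega, fun s hs => ?_⟩
    by_cases hsE : s ∈ E
    · exact hinvn _ hsE
    · have h1 : nn s ≤ B := hB (mem_image_of_mem _ ⟨hs, hsE⟩)
      obtain ⟨k, hk⟩ := Nat.exists_eq_add_of_le h1
      rw [show B + 1 = (k + 1) + nn s by omega, iterate_add_apply, hnn s ⟨hs, hsE⟩]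
      exact hzn _ (by omega)
  set S := closure E with hSdef
  have hES : E ⊆ S := subset_closure
  have hSc : IsClosed S := isClosed_closure
  have hSp : IsPreconnected S := hE.closure
  have hSn : S.Nonempty := ⟨g z, hES hgz⟩
  have hSinv : MapsTo g S S := hinv.closure hg
  set G := g^[M] with hG
  have hGc : Continuous G := hcont M
  have hGn : ∀ j, Continuous G^[j] := fun j => hGc.iterate j
  have hGj : ∀ j, G^[j] = g^[M * j] := fun j => (iterate_mul g M j).symm
  have hGE : ∀ j, MapsTo G^[j] E E := fun j => by rw [hGj]; exact hinvn _
  -- C not in interior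
  have hC : ¬ G '' S ⊆ interior S := by
    intro hcon
    have h2 : g^[2 * M] = G ∘ G := by rw [two_mul, iterate_add]
    have : z ∈ g^[2*M] '' S := by
      refine TR (hcont _) hSc ?_ (CR_iter hg hz) ?_
      · intro s hs
        rw [h2]; exact hcon (mem_image_of_mem _ (hES (hM hs)))
      · rw [h2]; exact hcon (mem_image_of_mem _ (hES (hzn M hM1)))
    obtain ⟨s, hs, e⟩ := this
    rw [h2] at e
    exact hzE (e ▸ hM (hES (hM hs)))
  have hKfin := cmps_finite hSp hSn
  set 𝒦 := (ccp S) '' Sᶜ with h𝒦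
  set 𝒟 : Set (Set X) := {K | K ∈ 𝒦 ∧ ∃ d ∈ E, d ∈ closure K} with h𝒟
  have h𝒟fin : 𝒟.Finite := hKfin.subset fun K h => h.1
  have h𝒟ne : 𝒟.Nonempty := by
    obtain ⟨c, hc, hci⟩ := not_subset.1 hC
    have hcE : c ∈ E := by obtain ⟨s, hs, rfl⟩ := hc; exact hM hs
    have h1 : c ∈ closure Sᶜ := by rw [closure_compl]; exact hci
    have h2 : Sᶜ ⊆ ⋃ K ∈ 𝒦, closure K := fun x hx =>
      mem_biUnion (mem_image_of_mem _ hx) (subset_closure (mem_connectedComponentIn hx))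
    have h3 : IsClosed (⋃ K ∈ 𝒦, closure K) := hKfin.isClosed_biUnion fun _ _ => isClosed_closure
    obtain ⟨K, hK, hcK⟩ := mem_iUnion₂.1 (closure_minimal h2 h3 h1)
    exact ⟨K, hK, c, hcE, hcK⟩
  set bad : Set X := ⋃ K ∈ (𝒦 \ 𝒟), closure K with hbad
  have hbadc : IsClosed bad := (hKfin.subset diff_subset).isClosed_biUnion fun _ _ => isClosed_closure
  have hbadE : ∀ x ∈ E, x ∉ bad := by
    intro x hx hb
    obtain ⟨K, hK, hxK⟩ := mem_iUnion₂.1 hb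
    exact hK.2 ⟨hK.1, x, hx, hxK⟩
  -- U
  set U : Set X := G ⁻¹' badᶜ ∩ ⋂ r ∈ Finset.Ico M (2 * M), g^[r] ⁻¹' {z}ᶜ with hU
  have hUo : IsOpen U := (hbadc.isOpen_compl.preimage hGc).inter
    (isOpen_biInter_finset fun r _ => isOpen_compl_singleton.preimage (hcont r))
  have hSU : S ⊆ U := by
    intro s hs
    refine ⟨hbadE _ (hM hs), mem_iInter₂.2 fun r hr => ?_⟩
    have hr' := Finset.mem_Ico.1 hr
    intro e
    have e' : g^[r] s = z := e
    rw [show r = (r - M) + M by omega, iterate_add_apply] at e'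
    exact hzE (e' ▸ hinvn _ (hM hs))
  -- choose data
  have hdata : ∀ K : 𝒟, ∃ x d y : X, x ∉ S ∧ (K : Set X) = ccp S x ∧ d ∈ E ∧ d ∈ closure (K : Set X) ∧
      y ≠ d ∧ y ∈ (K : Set X) ∧ seg d y ⊆ U ∧ (∀ n < 2 * M, z ∉ g^[n] '' seg d y) ∧
      ∀ w ∈ (K : Set X), w ∈ seg d y ∨ y ∈ seg d w := by
    rintro ⟨K, ⟨x, hx, rfl⟩, d, hdE, hdK⟩
    have hdx : d ≠ x := fun e => hx (e ▸ hES hdE)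
    have hOo : IsOpen (U ∩ ⋂ n ∈ Finset.range (2 * M), g^[n] ⁻¹' {z}ᶜ) := hUo.inter
      (isOpen_biInter_finset fun r _ => isOpen_compl_singleton.preimage (hcont r))
    obtain ⟨y, hy, hyd, hsub, hnb⟩ := NB hdx hOo ⟨hSU (hES hdE), mem_iInter₂.2 fun n _ e => by
      have e' : g^[n] d = z := e
      exact hzE (e' ▸ hinvn n hdE)⟩
    refine ⟨x, d, y, hx, rfl, hdE, hdK, hyd, ?_, fun w hw => (hsub hw).1, ?_, ?_⟩
    · have hp : IsPreconnected (insert d (ccp S x)) :=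
        isPreconnected_connectedComponentIn.subset_closure (subset_insert _ _)
          (insert_subset hdK subset_closure)
      rcases seg_sub hp (mem_insert _ _) (mem_insert_of_mem _ (mem_connectedComponentIn hx)) hy with h | h
      · exact absurd h hyd
      · exact h
    · rintro n hn ⟨w, hw, e⟩
      exact mem_iInter₂.1 (hsub hw).2 n (Finset.mem_range.2 hn) e
    · intro w hw
      apply hnb
      intro hd
      have := seg_sub isPreconnected_connectedComponentIn hw (mem_connectedComponentIn hx) hd
      exact connectedComponentIn_subset _ _ this (hES hdE)
  choose xx dd yy hxS hKx hdE hdK hyd hyK hAU hAz hnb using hdata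
  have hKS : ∀ K : 𝒟, ∀ w ∈ (K : Set X), w ∉ S := fun K w hw => by
    rw [hKx K] at hw; exact connectedComponentIn_subset _ _ hw
  set A : 𝒟 → Set X := fun K => seg (dd K) (yy K) with hA
  have hAK : ∀ K : 𝒟, ∀ w ∈ A K, w ≠ dd K → w ∈ (K : Set X) := by
    intro K w hw hne
    have hp : IsPreconnected (insert (dd K) (K : Set X)) := by
      have h9 := hdK K
      rw [hKx K] at h9 ⊢
      exact isPreconnected_connectedComponentIn.subset_closure (subset_insert _ _)
        (insert_subset h9 subset_closure)
    exact (seg_sub hp (mem_insert _ _) (mem_insert_of_mem _ (hyK K)) hw).resolve_left hne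
  haveI : Finite 𝒟 := h𝒟fin
  set V : Set X := S ∪ ⋃ K : 𝒟, A K with hV
  have hVU : V ⊆ U := union_subset hSU (iUnion_subset hAU)
  set R : Set X := bad ∪ ⋃ K : 𝒟, {w | yy K ∈ seg (dd K) w} with hR
  have hRc : IsClosed R := by
    refine hbadc.union (isClosed_iUnion_of_finite fun K => ?_)
    have := (open_not_mem_seg (dd K) (yy K)).isClosed_compl
    convert this using 1
    ext w; simp
  have hRE : ∀ w ∈ E, w ∉ R := by
    rintro w hw (h | h)
    · exact hbadE w hw h
    · obtain ⟨K, hK⟩ := mem_iUnion.1 h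
      exact hKS K _ (hyK K) (hES (seg_sub hE (hdE K) hw hK))
  have hVR : ∀ w, w ∉ R → w ∈ V := by
    intro w hw
    by_contra hwV
    have hwS : w ∉ S := fun h => hwV (Or.inl h)
    apply hw
    by_cases hD : ccp S w ∈ 𝒟
    · right
      refine mem_iUnion.2 ⟨⟨_, hD⟩, ?_⟩
      rcases hnb ⟨_, hD⟩ w (mem_connectedComponentIn hwS) with h | h
      · exact absurd (Or.inr (mem_iUnion.2 ⟨(⟨_, hD⟩ : 𝒟), h⟩)) hwV
      · exact h
    · left
      exact mem_biUnion (⟨mem_image_of_mem _ hwS, hD⟩ : ccp S w ∈ 𝒦 \ 𝒟) (subset_closure (mem_connectedComponentIn hwS))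
  -- landing
  have land : ∀ B : Set X, IsPreconnected B → (B ∩ S).Nonempty → ∀ w ∈ B, w ∉ V → w ∈ G '' V →
      ∃ K, A K ⊆ B := by
    rintro B hB ⟨s, hsB, hsS⟩ w hwB hwV ⟨v, hv, rfl⟩
    have hwS : G v ∉ S := fun h => hwV (Or.inl h)
    have hD : ccp S (G v) ∈ 𝒟 := by
      by_contra hD
      exact (hVU hv).1 (mem_biUnion (⟨mem_image_of_mem _ hwS, hD⟩ : ccp S (G v) ∈ 𝒦 \ 𝒟)
        (subset_closure (mem_connectedComponentIn hwS)))
    refine ⟨⟨_, hD⟩, ?_⟩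
    have hw := hnb ⟨_, hD⟩ (G v) (mem_connectedComponentIn hwS)
    have hw' : yy ⟨_, hD⟩ ∈ seg (dd ⟨_, hD⟩) (G v) := by
      rcases hw with h | h
      · exact absurd (Or.inr (mem_iUnion.2 ⟨(⟨_, hD⟩ : 𝒟), h⟩)) hwV
      · exact h
    obtain ⟨d', hd'B, hd'S, hd'K⟩ := cross_cmp hSc hwS hB ⟨s, hsB, hsS⟩ ⟨_, hwB, mem_connectedComponentIn hwS⟩
    have : dd ⟨_, hD⟩ = d' := clos_cmp_unique hSp (hES (hdE ⟨_, hD⟩)) (hdK ⟨_, hD⟩) hd'S hd'K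
    rw [← this] at hd'B
    exact (seg_sub_seg (left_seg _ _) hw').trans (seg_sub hB hd'B hwB)
  -- growth
  have hAE1 : ∀ K : 𝒟, ∀ y ∈ A K, y ≠ dd K → ∃ n ≥ 2 * M, z ∈ g^[n] '' seg (dd K) y := by
    intro K y hy hne
    obtain ⟨n, hn⟩ := E1 (seg (dd K) y) (segP _ _) ⟨dd K, left_seg _ _, hdE K⟩
      (fun h => hKS K y (hAK K y hy hne) (hES (h (right_seg _ _))))
    refine ⟨n, ?_, hn⟩
    by_contra! hlt
    exact hAz K n hlt (image_mono (seg_sub_seg (left_seg _ _) hy) hn)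
  have growth : ∀ K : 𝒟, ∀ y ∈ A K, y ≠ dd K → ∃ j ≥ 1, (∃ u ∈ seg (dd K) y, G^[j] u ∉ V ∧ G^[j] u ∈ G '' V) ∧
      ∃ K', A K' ⊆ G^[j] '' seg (dd K) y := by
    intro K y hy hne
    have hsubA : seg (dd K) y ⊆ A K := seg_sub_seg (left_seg _ _) hy
    obtain ⟨n, hn, v, hv, hvz⟩ := hAE1 K y hy hne
    have hex : ∃ j, ∃ u ∈ seg (dd K) y, G^[j] u ∉ V := by
      refine ⟨n / M - 1, v, hv, fun hvV => ?_⟩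
      have h1 := hVU hvV
      have hdm := Nat.div_add_mod n M
      have hml := Nat.mod_lt n hM1
      have h2 : 2 ≤ n / M := (Nat.le_div_iff_mul_le hM1).2 hn
      obtain ⟨q, hq⟩ := Nat.exists_eq_add_of_le' h2
      have h3 := mem_iInter₂.1 h1.2 (n % M + M) (Finset.mem_Ico.2 ⟨by omega, by omega⟩)
      apply h3
      show g^[n % M + M] (G^[n / M - 1] v) = z
      rw [hGj, ← iterate_add_apply, ← hvz]
      have e9 : n % M + M + M * (n / M - 1) = n := by
        rw [hq] at hdm ⊢
        rw [show q + 2 - 1 = q + 1 by omega]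
        linarith [mul_add M q 2, mul_add M q 1]
      rw [e9]
    classical
    have hj := Nat.find_spec hex
    set j := Nat.find hex with hjdef
    obtain ⟨u, hu, huV⟩ := hj
    have hj1 : 1 ≤ j := by
      by_contra! h0
      have : j = 0 := by omega
      rw [this] at huV
      exact huV (Or.inr (mem_iUnion.2 ⟨K, hsubA hu⟩))
    have hpred : G^[j] u ∈ G '' V := by
      have hlt : j - 1 < Nat.find hex := by omega
      have := Nat.find_min hex hlt
      push Not at this
      refine ⟨G^[j-1] u, this u hu, ?_⟩
      rw [← iterate_succ_apply' G, show (j - 1).succ = j by omega]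
    refine ⟨j, hj1, ⟨u, hu, huV, hpred⟩, ?_⟩
    exact land _ ((segP _ _).image _ (hGn j).continuousOn)
      ⟨_, mem_image_of_mem _ (left_seg _ _), hES (hGE j (hdE K))⟩ _ (mem_image_of_mem _ hu) huV hpred
  -- two branches
  have branch : ∀ K : 𝒟, ∃ Q1 Q2 : Set X, IsClosed Q1 ∧ IsClosed Q2 ∧ Q1 ⊆ A K ∧ Q2 ⊆ A K ∧ Disjoint Q1 Q2 ∧
      (∃ j ≥ 1, ∃ K', A K' ⊆ G^[j] '' Q1) ∧ (∃ j ≥ 1, ∃ K', A K' ⊆ G^[j] '' Q2) := by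
    intro K
    obtain ⟨n, hn, a, ha, haz⟩ := hAE1 K (yy K) (right_seg _ _) (hyd K)
    have had : a ≠ dd K := by
      rintro rfl
      exact hzE (haz ▸ hinvn n (hdE K))
    have haE : ∀ l, n + 1 ≤ l → G^[l] a ∈ E := by
      intro l hl
      rw [hGj]
      have : n + 1 ≤ M * l := hl.trans (Nat.le_mul_of_pos_left _ hM1)
      rw [show M * l = (M * l - n) + n by omega, iterate_add_apply, haz]
      exact hzn _ (by omega)
    have hOo : IsOpen (⋂ i ∈ Finset.Icc 1 (n+1), G^[i] ⁻¹' Rᶜ) :=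
      isOpen_biInter_finset fun i _ => hRc.isOpen_compl.preimage (hGn i)
    obtain ⟨O', hO', hdO', hsub, hseg⟩ := small_seg hOo (d := dd K) (mem_iInter₂.2 fun i hi =>
      hRE _ (hGE i (hdE K)))
    obtain ⟨y, hy, hyne, hyO⟩ := seg_acc had.symm hO' hdO'
    have hyA : y ∈ A K := seg_trans hy ha
    obtain ⟨j, hj1, ⟨u, hu, huV, hupred⟩, -⟩ := growth K y hyA hyne
    have hjl : n + 1 < j := by
      by_contra! hle
      have := mem_iInter₂.1 (hsub (hseg _ hdO' _ hyO hu)) j (Finset.mem_Icc.2 ⟨hj1, hle⟩)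
      exact huV (hVR _ this)
    have hua : u ∈ seg (dd K) a := seg_trans hu hy
    have huA : u ∈ A K := seg_trans hua ha
    have hud : u ≠ dd K := by
      rintro rfl
      exact huV (Or.inl (hES (hGE j (hdE K))))
    obtain ⟨y', hy', hy'd, hy'u⟩ := seg_acc hud.symm (isOpen_compl_singleton (x := u)) hud.symm
    have hy'A : y' ∈ A K := seg_trans hy' huA
    obtain ⟨j', hj', -, hK'⟩ := growth K y' hy'A hy'd
    refine ⟨seg (dd K) y', seg u a, segC _ _, segC _ _, seg_sub_seg (left_seg _ _) hy'A,
      seg_sub_seg huA ha, ?_, ⟨j', hj', hK'⟩, ⟨j, hj1, ?_⟩⟩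
    · rw [disjoint_left]
      intro q hq1 hq2
      have hqu : q = u := seg_meet hua (seg_trans hq1 hy') hq2
      subst hqu
      exact hy'u (seg_anti hy' hq1)
    · exact land _ ((segP _ _).image _ (hGn j).continuousOn)
        ⟨_, mem_image_of_mem _ (right_seg _ _), hES (haE j hjl.le)⟩ _ (mem_image_of_mem _ (left_seg _ _)) huV hupred
  choose Q1 Q2 hQ1 hQ2 hQ1A hQ2A hQd hj1 hj2 using branch
  choose j1 hj1' K1 hK1 using hj1
  choose j2 hj2' K2 hK2 using hj2
  refine hHS (HS_iter hM1 (f := g) ⟨𝒟, inferInstance, h𝒟ne.to_subtype, A, fun K b => if b then Q1 K else Q2 K,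
    fun K b => if b then j1 K else j2 K, fun K b => if b then K1 K else K2 K, fun K => ⟨_, left_seg _ _⟩, ?_, ?_, ?_, ?_, ?_⟩)
  · intro K b; cases b <;> simp [hQ1, hQ2]
  · intro K b; cases b <;> simp [hQ1A, hQ2A]
  · intro K b; cases b
    · simpa using hj2' K
    · simpa using hj1' K
  · intro K b; cases b
    · simpa using hK2 K
    · simpa using hK1 K
  · intro K; simpa using hQd K

theorem lemH {g : X → X} (hg : Continuous g) (hHS : ¬ HS g) {z : X} (hz : z ∈ chainRecurrentSet g)
    {F : Set X} (hF : IsPreconnected F) (hinv : MapsTo g F F) (hgz : g z ∈ F) : z ∈ F := by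
  by_contra hzF
  obtain ⟨E, hFE, hEmax⟩ := zorn_subset_nonempty {E | F ⊆ E ∧ IsPreconnected E ∧ MapsTo g E E ∧ z ∉ E} (by
    intro c hc hchain hne
    refine ⟨⋃₀ c, ⟨?_, ?_, ?_, ?_⟩, fun s hs => subset_sUnion_of_mem hs⟩
    · obtain ⟨s, hs⟩ := hne
      exact (hc hs).1.trans (subset_sUnion_of_mem hs)
    · exact isPreconnected_sUnion (g z) c (fun s hs => (hc hs).1 hgz) fun s hs => (hc hs).2.1
    · rintro x ⟨s, hs, hx⟩
      exact ⟨s, hs, (hc hs).2.2.1 hx⟩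
    · rintro ⟨s, hs, hx⟩
      exact (hc hs).2.2.2 hx) F ⟨Subset.rfl, hF, hinv, hzF⟩
  obtain ⟨h1, h2, h3, h4⟩ := hEmax.prop
  refine lemH_aux hg hHS hz h2 h3 (hFE hgz) h4 fun E' hEE' hp hi hz' => ?_
  exact hEmax.le_of_ge ⟨hFE.trans hEE', hp, hi, hz'⟩ hEE'

theorem lemHn {g : X → X} (hg : Continuous g) (hHS : ¬ HS g) {z : X} (hz : z ∈ chainRecurrentSet g)
    {F : Set X} (hF : IsPreconnected F) (hinv : MapsTo g F F) (n : ℕ) (hgz : g^[n] z ∈ F) : z ∈ F := by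
  induction n with
  | zero => exact hgz
  | succ n ih =>
    apply ih
    have hzn : g^[n] z ∈ chainRecurrentSet g := by
      clear ih hgz
      induction n with
      | zero => exact hz
      | succ n ih => rw [iterate_succ_apply']; exact CR_inv hg ih
    refine lemH hg hHS hzn hF hinv ?_
    rwa [← iterate_succ_apply' g]
end HL

end Be

section Bf
section KL
universe v
variable {X : Type v} [MetricSpace X] [TA X]

theorem sep_base {P : Set X} (hP : IsPreconnected P) {p p' w y : X} (hp : p ∈ P) (hp' : p' ∈ P) (hw : w ∉ P)
    (h : w ∈ seg p y) : w ∈ seg p' y := by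
  rcases seg_sub_union p p' y h with h | h
  · exact absurd (seg_sub hP hp hp' h) hw
  · exact h

theorem CR_it {g : X → X} (hg : Continuous g) {z : X} (hz : z ∈ chainRecurrentSet g) (n : ℕ) :
    g^[n] z ∈ chainRecurrentSet g := by
  induction n with
  | zero => exact hz
  | succ n ih => rw [iterate_succ_apply']; exact CR_inv hg ih

theorem pre_union_images {g : X → X} (hg : Continuous g) {P Q : Set X} (hP : IsPreconnected P)
    (hQ : IsPreconnected Q) {x : X} (hx : x ∈ Q) (n : ℕ) (h : ∀ i, g^[n + i] x ∈ P) :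
    IsPreconnected (P ∪ ⋃ i, g^[n + i] '' Q) := by
  rw [union_iUnion]
  refine isPreconnected_iUnion ⟨_, mem_iInter.2 fun i => Or.inl (h 0)⟩ fun i => ?_
  exact IsPreconnected.union _ (h i) (mem_image_of_mem _ hx) hP (hQ.image _ (hg.iterate _).continuousOn)

theorem inv_union_images {g : X → X} {P Q : Set X} (hP : MapsTo g P P) (n : ℕ) :
    MapsTo g (P ∪ ⋃ i, g^[n + i] '' Q) (P ∪ ⋃ i, g^[n + i] '' Q) := by
  rintro w (hw | hw)
  · exact Or.inl (hP hw)
  · obtain ⟨i, y, hy, rfl⟩ := mem_iUnion.1 hw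
    exact Or.inr (mem_iUnion.2 ⟨i + 1, y, hy, iterate_succ_apply' _ _ _⟩)

theorem KLlin {g : X → X} (hg : Continuous g) (hHS : ¬ HS g) {P : Set X} (hP : IsPreconnected P)
    (hinv : MapsTo g P P) {z : X} (hz : z ∈ chainRecurrentSet g) (hzP : z ∉ P) {x p : X} (hx : x ∉ P)
    {n : ℕ} (hxn : g^[n] x ∈ P) (hp : p ∈ P) {a b : ℕ} (h1 : g^[a] z ∈ seg p x)
    (h2 : x ∈ seg p (g^[b] z)) : False := by
  have hzi : ∀ i, g^[i] z ∉ P := fun i h => hzP (lemHn hg hHS hz hP hinv i h)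
  have hn : 1 ≤ n := by
    by_contra! h
    have : n = 0 := by omega
    subst this; exact hx hxn
  set Q := seg x (g^[b] z) with hQ
  have hE : g^[b] z ∈ P ∪ ⋃ i, g^[n + i] '' Q := by
    refine lemHn hg hHS (CR_it hg hz b) (pre_union_images hg hP (segP _ _) (left_seg _ _) n fun i => ?_)
      (inv_union_images hinv n) n (Or.inr (mem_iUnion.2 ⟨0, _, right_seg _ _, rfl⟩))
    rw [add_comm, iterate_add_apply]; exact hinv.iterate i hxn
  obtain ⟨i, hi⟩ := mem_iUnion.1 (hE.resolve_left (hzi b))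
  set j := n + i with hj
  have hp' : g^[j] x ∈ P := by
    rw [hj, add_comm, iterate_add_apply]; exact hinv.iterate i hxn
  set p' := g^[j] x with hp'def
  have hsubj : seg p' (g^[b] z) ⊆ g^[j] '' Q := seg_sub ((segP _ _).image _ (hg.iterate _).continuousOn)
    (mem_image_of_mem _ (left_seg _ _)) hi
  have h1' : g^[a] z ∈ seg p' x := sep_base hP hp hp' (hzi a) h1
  have h2' : x ∈ seg p' (g^[b] z) := sep_base hP hp hp' hx h2
  set Q' := seg p' (g^[a] z) with hQ'
  have hxz : x ≠ g^[a] z := by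
    rintro e
    rw [e, ← iterate_add_apply] at hxn
    exact hzi _ hxn
  have hdis : Disjoint Q Q' := by
    rw [disjoint_left]
    intro w hw hw'
    have : w = x := seg_meet h2' (seg_trans hw' h1') hw
    subst this
    exact hxz (seg_anti hw' h1')
  have hE' : g^[b] z ∈ P ∪ ⋃ i, g^[0 + i] '' Q' := by
    refine lemHn hg hHS (CR_it hg hz b) (pre_union_images hg hP (segP _ _) (left_seg _ _) 0 fun i => hinv.iterate _ hp')
      (inv_union_images hinv 0) a (Or.inr (mem_iUnion.2 ⟨b, _, right_seg _ _, ?_⟩))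
    rw [← iterate_add_apply, ← iterate_add_apply, show 0 + b + a = a + b by omega]
  obtain ⟨l, hl⟩ := mem_iUnion.1 (hE'.resolve_left (hzi b))
  rw [zero_add] at hl
  have hsubl : Q ⊆ g^[l] '' Q' := by
    have h3 : seg (g^[l] p') (g^[b] z) ⊆ g^[l] '' Q' := seg_sub ((segP _ _).image _ (hg.iterate _).continuousOn)
      (mem_image_of_mem _ (left_seg _ _)) hl
    exact (seg_sub_seg (sep_base hP hp (hinv.iterate l hp') hx h2) (right_seg _ _)).trans h3
  have hQj : Q ⊆ g^[j] '' Q := (seg_sub_seg h2' (right_seg _ _)).trans hsubj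
  have hQ'j : Q' ⊆ g^[j] '' Q := (seg_sub_seg (left_seg _ _) (seg_trans h1' h2')).trans hsubj
  refine hHS ⟨PUnit, inferInstance, inferInstance, fun _ => Q, fun _ b => if b then Q ∩ g^[j] ⁻¹' Q else Q ∩ g^[j] ⁻¹' Q',
    fun _ b => if b then j else l + j, fun _ _ => PUnit.unit, fun _ => ⟨x, left_seg _ _⟩, ?_, ?_, ?_, ?_, ?_⟩
  · intro _ b; cases b
    · exact (segC _ _).inter ((segC _ _).preimage (hg.iterate j))
    · exact (segC _ _).inter ((segC _ _).preimage (hg.iterate j))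
  · intro _ b; cases b
    · exact inter_subset_left
    · exact inter_subset_left
  · intro _ b; cases b
    · show 1 ≤ l + j; omega
    · show 1 ≤ j; omega
  · intro _ b; cases b
    · intro q hq
      obtain ⟨q', hq', rfl⟩ := hsubl hq
      obtain ⟨q'', hq'', rfl⟩ := hQ'j hq'
      exact ⟨q'', ⟨hq'', hq'⟩, iterate_add_apply _ _ _ _⟩
    · intro q hq
      obtain ⟨q', hq', rfl⟩ := hQj hq
      exact ⟨q', ⟨hq', hq⟩, rfl⟩
  · intro _
    show Disjoint (Q ∩ g^[j] ⁻¹' Q) (Q ∩ g^[j] ⁻¹' Q')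
    rw [disjoint_left]
    intro w hw hw'
    exact disjoint_left.1 hdis hw.2 hw'.2

def KE (g : X → X) (P : Set X) (x y : X) : Prop := ∀ n, Disjoint (g^[n] '' seg x y) P

def cU (h : X → X) (x : X) : Set X := ⋃ m : ℕ, h^[m] '' seg x (h x)

theorem cU_pre {h : X → X} (hh : Continuous h) (x : X) : IsPreconnected (cU h x) := by
  refine IsPreconnected.iUnion_of_chain (fun n => (segP _ _).image _ (hh.iterate n).continuousOn) fun n => ?_
  exact ⟨h^[n] (h x), mem_image_of_mem _ (right_seg _ _), x |> fun _ => ⟨x, left_seg _ _, iterate_succ_apply _ _ _⟩⟩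

theorem cU_inv (h : X → X) (x : X) : MapsTo h (cU h x) (cU h x) := by
  intro w hw
  obtain ⟨m, y, hy, rfl⟩ := mem_iUnion.1 hw
  exact mem_iUnion.2 ⟨m + 1, y, hy, iterate_succ_apply' _ _ _⟩

theorem cU_mem (h : X → X) (x : X) (m : ℕ) : h^[m] x ∈ cU h x :=
  mem_iUnion.2 ⟨m, x, left_seg _ _, rfl⟩

theorem cU_KE {g : X → X} {P : Set X} {x : X} {d : ℕ} (h : KE g P x (g^[d] x)) (n : ℕ) :
    Disjoint (g^[n] '' cU g^[d] x) P := by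
  rw [disjoint_left]
  rintro _ ⟨w, hw, rfl⟩ hP
  obtain ⟨m, y, hy, rfl⟩ := mem_iUnion.1 hw
  rw [← iterate_mul, ← iterate_add_apply] at hP
  exact disjoint_left.1 (h (n + d * m)) (mem_image_of_mem _ hy) hP

theorem KLper {g : X → X} (hg : Continuous g) (hHS : ¬ HS g) {P : Set X} (hP : IsPreconnected P)
    (hPn : P.Nonempty) (hinv : MapsTo g P P) {z : X} (hz : z ∈ chainRecurrentSet g) (hzP : z ∉ P) :
    ∃ d, 1 ≤ d ∧ d ≤ tN X ∧ KE g P z (g^[d] z) := by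
  have hzi : ∀ i, g^[i] z ∉ P := fun i h => hzP (lemHn hg hHS hz hP hinv i h)
  obtain ⟨p, hp⟩ := hPn
  obtain ⟨a, b, hab, hbN, hKE⟩ : ∃ a b, a < b ∧ b ≤ tN X ∧ KE g P (g^[a] z) (g^[b] z) := by
    by_contra! hcon
    set T : Set X := {x | (∃ n, g^[n] x ∈ P) ∧ ∃ b, x ∈ seg p (g^[b] z)} with hT
    have hP1 : IsPreconnected (P ∪ ⋃ x : T, seg p x) := by
      refine isPreconnected_of_forall p ?_
      rintro y (hy | hy)
      · exact ⟨P, subset_union_left, hp, hy, hP⟩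
      · obtain ⟨x, hx⟩ := mem_iUnion.1 hy
        exact ⟨seg p x, (subset_iUnion (fun x : T => seg p (x : X)) x).trans subset_union_right, left_seg _ _, hx, segP _ _⟩
    have hzP1 : ∀ i, g^[i] z ∉ P ∪ ⋃ x : T, seg p x := by
      rintro i (h | h)
      · exact hzi i h
      · obtain ⟨⟨x, ⟨n, hn⟩, b, hb⟩, hx⟩ := mem_iUnion.1 h
        have hxP : x ∉ P := fun h => hzi i (seg_sub hP hp h hx)
        exact KLlin hg hHS hP hinv hz hzP hxP hn hp hx hb
    obtain ⟨i, j, hij, hj, hd⟩ := FIN hP1 ⟨p, Or.inl hp⟩ (fun i => g^[i] z) hzP1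
    have := hcon i j hij hj
    simp only [KE, not_forall, not_disjoint_iff] at this
    obtain ⟨n, _, ⟨x, hx, rfl⟩, hxP⟩ := this
    refine disjoint_left.1 hd hx (Or.inr ?_)
    rcases seg_sub_union _ p _ hx with h | h
    · rw [seg_comm] at h
      exact mem_iUnion.2 ⟨⟨x, ⟨n, hxP⟩, i, h⟩, right_seg _ _⟩
    · exact mem_iUnion.2 ⟨⟨x, ⟨n, hxP⟩, j, h⟩, right_seg _ _⟩
  obtain ⟨d, rfl⟩ := Nat.exists_eq_add_of_lt hab
  refine ⟨d + 1, by omega, by omega, ?_⟩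
  set D := d + 1 with hD
  have hKE' : KE g P (g^[a] z) (g^[D] (g^[a] z)) := by
    rw [← iterate_add_apply, show D + a = a + d + 1 by omega]; exact hKE
  set r := D * a - a with hr
  have har : r + a = D * a := by
    have : a ≤ D * a := Nat.le_mul_of_pos_left a (by omega)
    omega
  have hcomm : ∀ w, g^[D] (g^[r] w) = g^[r] (g^[D] w) := fun w => by
    rw [← iterate_add_apply, ← iterate_add_apply, add_comm]
  have hzS : z ∈ g^[r] '' cU g^[D] (g^[a] z) := by
    refine lemHn (hg.iterate D) (fun h => hHS (HS_iter (by omega) h)) (CR_iter hg hz)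
      ((cU_pre (hg.iterate D) _).image _ (hg.iterate r).continuousOn) ?_ a ⟨_, cU_mem _ _ 0, ?_⟩
    · rintro _ ⟨w, hw, rfl⟩
      exact ⟨_, cU_inv _ _ hw, (hcomm w).symm⟩
    · show g^[r] (g^[a] z) = _
      rw [← iterate_add_apply, har, iterate_mul]
  have hDz : g^[D] z ∈ g^[r] '' cU g^[D] (g^[a] z) := by
    obtain ⟨w, hw, e⟩ := hzS
    exact ⟨_, cU_inv _ _ hw, by rw [← hcomm, e]⟩
  have hsub := seg_sub ((cU_pre (hg.iterate D) (g^[a] z)).image _ (hg.iterate r).continuousOn) hzS hDz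
  intro n
  have := cU_KE hKE' (n + r)
  rw [iterate_add, image_comp] at this
  exact this.mono_left (image_mono hsub)

theorem KLfac {g : X → X} (hg : Continuous g) (hHS : ¬ HS g) {P : Set X} (hP : IsPreconnected P)
    (hPn : P.Nonempty) (hinv : MapsTo g P P) {z : X} (hz : z ∈ chainRecurrentSet g) (hzP : z ∉ P) (q n : ℕ) :
    Disjoint (g^[n] '' seg z (g^[(tN X).factorial * q] z)) P := by
  obtain ⟨d, hd1, hdN, hKE⟩ := KLper hg hHS hP hPn hinv hz hzP
  obtain ⟨e, he⟩ := Nat.dvd_factorial hd1 hdN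
  refine (cU_KE hKE n).mono_left (image_mono (seg_sub (cU_pre (hg.iterate d) _) (cU_mem _ _ 0) ?_))
  rw [he, mul_assoc, iterate_mul]; exact cU_mem _ _ _
end KL

end Bf

section Bg
section PB
universe v
variable {X : Type v} [MetricSpace X] [TA X]

theorem lemA {f : X → X} (hf : Continuous f) (hHS : ¬ HS f) {m : ℕ} (hm : 1 ≤ m) {P : Set X}
    (hP : IsPreconnected P) (hPn : P.Nonempty) (hinv : MapsTo f^[m] P P) {w : X}
    (hw : w ∈ chainRecurrentSet f) (hwP : w ∉ P) {c : X} {n : ℕ} (hn : f^[m * n] c ∈ P) {t : ℕ}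
    (ht : m * (tN X).factorial ∣ t) : c ∉ seg w (f^[t] w) := by
  obtain ⟨q, rfl⟩ := ht
  intro hc
  have := KLfac (hf.iterate m) (fun h => hHS (HS_iter hm h)) hP hPn hinv (CR_iter hf hw) hwP q n
  rw [← iterate_mul, ← iterate_mul, ← mul_assoc] at this
  exact disjoint_left.1 this (mem_image_of_mem _ hc) hn

def Pat (f : X → X) (A B : Set X) (I : Finset ℕ) : Prop :=
  ∀ s : ℕ → Bool, ∃ z ∈ chainRecurrentSet f, ∀ t ∈ I, f^[t] z ∈ (if s t then A else B)

theorem Pat.mono {f : X → X} {A B : Set X} {I J : Finset ℕ} (h : Pat f A B I) (hJ : J ⊆ I) : Pat f A B J :=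
  fun s => (h s).imp fun z hz => ⟨hz.1, fun t ht => hz.2 t (hJ ht)⟩

theorem pigeon_lt {I : Finset ℕ} {m : ℕ} (g : ℕ → ℕ) (hg : ∀ t ∈ I, g t < m) (h : m < I.card) :
    ∃ t ∈ I, ∃ t' ∈ I, t < t' ∧ g t = g t' := by
  obtain ⟨x, hx, y, hy, hne, e⟩ := Finset.exists_ne_map_eq_of_card_lt_of_maps_to
    (s := I) (t := Finset.range m) (by simpa using h) (f := g) (fun t ht => by simpa using hg t ht)
  rcases lt_or_gt_of_ne hne with h1 | h1
  · exact ⟨x, hx, y, hy, h1, e⟩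
  · exact ⟨y, hy, x, hx, h1, e.symm⟩

theorem Pat_per {f : X → X} (hf : Continuous f) (hHS : ¬ HS f) {A B : Set X} {c : X}
    (hc : ∀ x ∈ A, ∀ y ∈ B, c ∈ seg x y) (hcA : c ∉ A) {m : ℕ} (hm : 1 ≤ m) (hper : f^[m] c = c)
    {I : Finset ℕ} (hI : Pat f A B I) : I.card ≤ m * (tN X).factorial := by
  by_contra! hcard
  have hpos : 0 < m * (tN X).factorial := Nat.mul_pos hm (Nat.factorial_pos _)
  obtain ⟨t, ht, t', ht', hlt, e⟩ := pigeon_lt (fun t => t % (m * (tN X).factorial))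
    (fun t _ => Nat.mod_lt _ hpos) hcard
  obtain ⟨z, hz, hpat⟩ := hI fun u => decide (u = t)
  have h1 := hpat t ht
  have h2 := hpat t' ht'
  simp only [decide_true, if_true] at h1
  rw [if_neg (by simpa using (by omega : t' ≠ t))] at h2
  have h3 := lemA (P := {c}) hf hHS hm isPreconnected_singleton (singleton_nonempty c)
    (by intro x hx; rw [mem_singleton_iff] at hx; subst hx; exact hper) (CR_it hf hz t)
    (fun h => hcA (by rw [mem_singleton_iff] at h; exact h ▸ h1)) (c := c) (n := 0) rfl
    ((Nat.modEq_iff_dvd' hlt.le).1 e)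
  rw [← iterate_add_apply, Nat.sub_add_cancel hlt.le] at h3
  exact h3 (hc _ h1 _ h2)

theorem EC_iff {f : X → X} {ε : ℝ} {c y : X} : EpsChain f ε c y ↔
    dist (f c) y < ε ∨ ∃ x, EpsChain f ε c x ∧ dist (f x) y < ε := by
  constructor
  · rintro ⟨n, hn, u, h0, h1, h2⟩
    obtain ⟨k, rfl⟩ := Nat.exists_eq_add_of_le' hn
    have h3 := h2 k (by omega)
    rw [h1] at h3
    rcases Nat.eq_zero_or_pos k with rfl | hk
    · left; rwa [h0] at h3
    · right; exact ⟨u k, ⟨k, hk, u, h0, rfl, fun i hi => h2 i (by omega)⟩, h3⟩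
  · rintro (h | ⟨x, ⟨n, hn, u, h0, h1, h2⟩, h⟩)
    · refine ⟨1, le_rfl, fun i => if i = 0 then c else y, rfl, rfl, fun i hi => ?_⟩
      have : i = 0 := by omega
      subst this; simpa using h
    · refine ⟨n + 1, by omega, fun i => if i ≤ n then u i else y, by simpa using h0, by simp, fun i hi => ?_⟩
      rcases Nat.lt_or_ge i n with h3 | h3
      · simpa [h3.le, Nat.succ_le_of_lt h3] using h2 i h3
      · have : i = n := by omega
        subst this
        simpa [h1] using h

theorem attr {f : X → X} (hf : Continuous f) {c : X} (hc : c ∉ chainRecurrentSet f) :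
    ∃ W : Set X, IsOpen W ∧ MapsTo f (closure W) W ∧ c ∉ W ∧ f c ∈ W := by
  simp only [chainRecurrentSet, mem_ofPred_eq, not_forall] at hc
  obtain ⟨ε, hε, hc⟩ := hc
  refine ⟨{y | EpsChain f ε c y}, ?_, ?_, hc, ?_⟩
  · have : {y | EpsChain f ε c y} = Metric.ball (f c) ε ∪ ⋃ x ∈ {x | EpsChain f ε c x}, Metric.ball (f x) ε := by
      ext y
      simp only [mem_ofPred_eq, mem_union, Metric.mem_ball, mem_iUnion, exists_prop, dist_comm y]
      exact EC_iff
    rw [this]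
    exact Metric.isOpen_ball.union (isOpen_biUnion fun _ _ => Metric.isOpen_ball)
  · intro y hy
    obtain ⟨δ, hδ, h⟩ := Metric.continuous_iff.1 hf y ε hε
    obtain ⟨y', hy', hd⟩ := Metric.mem_closure_iff.1 hy δ hδ
    exact EC_iff.2 (Or.inr ⟨y', hy', h y' (by rwa [dist_comm])⟩)
  · exact EC_iff.2 (Or.inl (by simpa using hε))

theorem attr_back {f : X → X} (hf : Continuous f) {W : Set X} (hW : IsOpen W) (hm : MapsTo f (closure W) W)
    {z : X} (hz : z ∈ chainRecurrentSet f) {n : ℕ} (hn : f^[n] z ∈ W) : z ∈ W := by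
  rcases Nat.eq_zero_or_pos n with rfl | hpos
  · exact hn
  have hmW : MapsTo f W W := fun x hx => hm (subset_closure hx)
  have hWn : MapsTo f^[n] (closure W) W := by
    intro x hx
    obtain ⟨k, rfl⟩ := Nat.exists_eq_add_of_le' hpos
    rw [iterate_add_apply]
    exact hmW.iterate k (hm hx)
  have hWi : W ⊆ interior (closure W) := hW.subset_interior_closure
  obtain ⟨x, hx, rfl⟩ := TR (hf.iterate n) isClosed_closure (fun x hx => hWi (hWn hx)) (CR_iter hf hz) (hWi hn)
  exact hWn hx

theorem cc_img {f : X → X} {W : Set X} (hf : Continuous f) (hm : MapsTo f W W) {x y : X}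
    (h : y ∈ connectedComponentIn W x) (a : ℕ) :
    f^[a] y ∈ connectedComponentIn W (f^[a] x) := by
  have hx : x ∈ W := mem_of_mem_of_subset h (connectedComponentIn_subset _ _) |> fun _ => by
    by_contra hx
    rw [connectedComponentIn_eq_empty hx] at h; exact h
  have := (isPreconnected_connectedComponentIn (F := W) (x := x)).image f^[a] (hf.iterate a).continuousOn
  exact this.subset_connectedComponentIn (mem_image_of_mem _ (mem_connectedComponentIn hx))
    (by rintro _ ⟨w, hw, rfl⟩; exact hm.iterate a (connectedComponentIn_subset _ _ hw))
    (mem_image_of_mem _ h)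

theorem Pat_nonCR {f : X → X} (hf : Continuous f) (hHS : ¬ HS f) {A B : Set X} {c : X}
    (hc : ∀ x ∈ A, ∀ y ∈ B, c ∈ seg x y) (hcCR : c ∉ chainRecurrentSet f) :
    ∃ D, ∀ I : Finset ℕ, Pat f A B I → I.card ≤ D := by
  classical
  obtain ⟨W, hWo, hm, hcW, hfc⟩ := attr hf hcCR
  have hmW : MapsTo f W W := fun x hx => hm (subset_closure hx)
  obtain ⟨T, hT, hcov⟩ := (isClosed_closure.isCompact.image hf : IsCompact (f '' closure W)).elim_nhds_subcover
    (fun x => connectedComponentIn W x) (by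
      rintro _ ⟨x, hx, rfl⟩
      exact hWo.connectedComponentIn.mem_nhds (mem_connectedComponentIn (hm hx)))
  have hTW : ∀ x ∈ T, x ∈ W := by
    intro x hx; obtain ⟨y, hy, rfl⟩ := hT x hx; exact hm hy
  have hcovf : ∀ x ∈ f '' closure W, ∃ y ∈ T, x ∈ connectedComponentIn W y := by
    intro x hx
    obtain ⟨y, hy, h⟩ := mem_iUnion₂.1 (hcov hx)
    exact ⟨y, hy, h⟩
  -- periodic component
  have hcn : ∀ n, f^[n + 1] c ∈ W := fun n => by rw [iterate_succ_apply]; exact hmW.iterate n hfc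
  have hcn2 : ∀ n, f^[n + 2] c ∈ f '' closure W := fun n =>
    ⟨f^[n+1] c, subset_closure (hcn n), (iterate_succ_apply' _ _ _).symm⟩
  choose! γ hγT hγ using hcovf
  obtain ⟨n, n', hlt, hn⟩ : ∃ n n' : ℕ, n < n' ∧ f^[n'] c ∈ connectedComponentIn W (f^[n] c) ∧ 1 ≤ n := by
    obtain ⟨i, j, hij, e⟩ := Finite.exists_ne_map_eq_of_infinite (fun n : ℕ => (⟨γ (f^[n+2] c), hγT _ (hcn2 n)⟩ : T))
    have e' : γ (f^[i+2] c) = γ (f^[j+2] c) := congrArg Subtype.val e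
    have h1 := connectedComponentIn_eq (hγ _ (hcn2 i))
    have h2 := connectedComponentIn_eq (hγ _ (hcn2 j))
    rw [e', h2] at h1
    rcases lt_or_gt_of_ne hij with h | h
    · exact ⟨i + 2, j + 2, by omega, by rw [← h1]; exact mem_connectedComponentIn (hcn (j+1)), by omega⟩
    · exact ⟨j + 2, i + 2, by omega, by rw [h1]; exact mem_connectedComponentIn (hcn (i+1)), by omega⟩
  obtain ⟨hn, hn1⟩ := hn
  obtain ⟨m, rfl⟩ := Nat.exists_eq_add_of_lt hlt
  set M := m + 1 with hM
  have hle : n ≤ M * n := Nat.le_mul_of_pos_left n (by omega)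
  set P := connectedComponentIn W (f^[M * n] c) with hP
  have hcW' : f^[M * n] c ∈ W := by
    obtain ⟨k, hk⟩ := Nat.exists_eq_add_of_le' (hn1.trans hle)
    rw [hk]; exact hcn k
  have hcP : f^[M * n] c ∈ P := mem_connectedComponentIn hcW'
  have hPm : f^[M + M * n] c ∈ P := by
    have := cc_img hf hmW hn (M * n - n)
    rw [← iterate_add_apply, ← iterate_add_apply, Nat.sub_add_cancel hle, show M * n - n + (n + m + 1) = M + M * n by omega] at this
    exact this
  have hPinv : MapsTo f^[M] P P := by
    intro x hx
    have := cc_img hf hmW hx M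
    rw [← iterate_add_apply] at this
    rwa [hP, connectedComponentIn_eq hPm]
  have hpos : 0 < M * (tN X).factorial := Nat.mul_pos (by omega) (Nat.factorial_pos _)
  have key : ∀ z ∈ chainRecurrentSet f, ∀ t t', t < t' → t % (M * (tN X).factorial) = t' % (M * (tN X).factorial) →
      c ∈ seg (f^[t] z) (f^[t'] z) → z ∈ W := by
    intro z hz t t' hlt e hcs
    by_contra hzW
    have h3 := lemA hf hHS (by omega : 1 ≤ M) isPreconnected_connectedComponentIn ⟨_, hcP⟩ hPinv (CR_it hf hz t)
      (fun h => hzW (attr_back hf hWo hm hz (connectedComponentIn_subset _ _ h))) hcP ((Nat.modEq_iff_dvd' hlt.le).1 e)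
    rw [← iterate_add_apply, Nat.sub_add_cancel hlt.le] at h3
    exact h3 hcs
  refine ⟨M * (tN X).factorial * (T.card + 1), fun I hI => ?_⟩
  by_contra! hcard
  obtain ⟨r, -, hr⟩ := Finset.exists_lt_card_fiber_of_mul_lt_card_of_maps_to
    (s := I) (t := Finset.range (M * (tN X).factorial)) (f := fun t => t % (M * (tN X).factorial))
    (n := T.card + 1) (fun t _ => Finset.mem_range.2 (Nat.mod_lt _ hpos)) (by simpa using hcard)
  set I' := I.filter (fun t => t % (M * (tN X).factorial) = r) with hI'
  have hPat' : Pat f A B I' := hI.mono (Finset.filter_subset _ _)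
  have hmod : ∀ t ∈ I', t % (M * (tN X).factorial) = r := fun t ht => (Finset.mem_filter.1 ht).2
  choose zz hzz hzp using fun t : ℕ => hPat' fun u => decide (u = t)
  have hA : ∀ t ∈ I', f^[t] (zz t) ∈ A := fun t ht => by simpa using hzp t t ht
  have hB : ∀ t, ∀ u ∈ I', u ≠ t → f^[u] (zz t) ∈ B := fun t u hu hne => by simpa [hne] using hzp t u hu
  have hzW : ∀ t ∈ I', zz t ∈ W := by
    intro t ht
    obtain ⟨u, hu, hut⟩ := Finset.exists_mem_ne (by omega : 1 < I'.card) t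
    have hcs := hc _ (hA t ht) _ (hB t u hu hut)
    rcases lt_or_gt_of_ne hut with h | h
    · rw [seg_comm] at hcs
      exact key _ (hzz t) u t h ((hmod u hu).trans (hmod t ht).symm) hcs
    · exact key _ (hzz t) t u h ((hmod t ht).trans (hmod u hu).symm) hcs
  have hzfW : ∀ t ∈ I', zz t ∈ f '' closure W := fun t ht =>
    TR hf isClosed_closure (fun x hx => hWo.subset_interior_closure (hm hx)) (hzz t)
      (hWo.subset_interior_closure (hmW (hzW t ht)))
  obtain ⟨t, ht, t', ht', hne, e⟩ := Finset.exists_ne_map_eq_of_card_lt_of_maps_to (s := I') (t := T)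
    (by omega) (f := fun t => γ (zz t)) (fun t ht => hγT _ (hzfW t ht))
  have e' : γ (zz t) = γ (zz t') := e
  have h1 := connectedComponentIn_eq (hγ _ (hzfW t ht))
  have h2 : zz t' ∈ connectedComponentIn W (zz t) := by
    rw [← h1, e']; exact hγ _ (hzfW t' ht')
  have h3 := cc_img hf hmW h2 t
  have h4 := hc _ (hA t ht) _ (hB t' t ht hne)
  exact hcW (connectedComponentIn_subset _ _ (seg_sub isPreconnected_connectedComponentIn
    (mem_connectedComponentIn (hmW.iterate t (hzW t ht))) h3 h4))
end PB

end Bg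

section Bh
section NP
universe v
variable {X : Type v} [MetricSpace X] [TA X]

theorem open_mem_seg {c y x : X} (hy : y ∈ seg c x) (hne : y ≠ x) :
    ∃ O, IsOpen O ∧ x ∈ O ∧ ∀ w ∈ O, y ∈ seg c w := by
  refine ⟨{w | y ∉ seg x w}, open_not_mem_seg x y, ?_, fun w hw => ?_⟩
  · show y ∉ seg x x
    rw [seg_self]; exact hne
  · rcases seg_sub_union c w x hy with h | h
    · exact h
    · rw [seg_comm] at h; exact absurd h hw

theorem pre_seg_diff (p y : X) : IsPreconnected (seg p y \ {p}) := by
  refine pre_of_seg fun u hu v hv w hw => ⟨seg_sub_seg hu.1 hv.1 hw, ?_⟩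
  intro e
  rw [mem_singleton_iff] at e; subst e
  rcases seg_lin hu.1 hv.1 with h | h
  · exact hu.2 (seg_meet h (left_seg _ _) hw).symm
  · rw [seg_comm] at hw
    exact hv.2 (seg_meet h (left_seg _ _) hw).symm

def BB (h : X → X) (c : X) (S : Set X) : Set X := {x ∈ S | ∀ y ∈ seg c x, y ∈ seg c (h y)}

theorem BB_closed {h : X → X} (hh : Continuous h) (c : X) {S : Set X} (hS : IsClosed S) :
    IsClosed (BB h c S) := by
  rw [← closure_subset_iff_isClosed]
  intro x hx
  refine ⟨closure_minimal (fun w hw => hw.1) hS hx, ?_⟩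
  have h1 : ∀ y ∈ seg c x, y ≠ x → y ∈ seg c (h y) := by
    intro y hy hne
    obtain ⟨O, hO, hxO, hw⟩ := open_mem_seg hy hne
    obtain ⟨w, hwO, hwB⟩ := mem_closure_iff.1 hx O hO hxO
    exact hwB.2 y (hw w hwO)
  intro y hy
  by_cases hne : y = x
  swap
  · exact h1 y hy hne
  subst hne
  by_contra hcon
  by_cases hcy : y = c
  · subst hcy; exact hcon (left_seg _ _)
  obtain ⟨y0, hy0, hy0y, hy0h⟩ := seg_acc hcy (segC c (h y)).isOpen_compl hcon
  have hO : IsOpen (h ⁻¹' {w | y0 ∉ seg c w}) := (open_not_mem_seg c y0).preimage hh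
  rw [seg_comm] at hy0
  obtain ⟨O, hO2, hyO2, hw⟩ := open_mem_seg hy0 hy0y
  obtain ⟨y1, hy1, hy1y, hy1O⟩ := seg_acc hcy (hO.inter hO2) ⟨hy0h, hyO2⟩
  rw [seg_comm] at hy1
  exact hy1O.1 (seg_trans (hw y1 hy1O.2) (h1 y1 hy1 hy1y))

theorem BB_max {h : X → X} (hh : Continuous h) (c : X) {S : Set X} (hS : IsClosed S) (hc : c ∈ S) :
    ∃ p ∈ BB h c S, ∀ y ∈ BB h c S, p ∈ seg c y → y = p := by
  have hB := BB_closed hh c hS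
  have hcB : c ∈ BB h c S := ⟨hc, fun y hy => by
    rw [seg_self, mem_singleton_iff] at hy; subst hy; exact left_seg _ _⟩
  obtain ⟨s, hsub, hmax⟩ := zorn_subset_nonempty ((seg c) '' BB h c S) (by
    intro C hC hchain hne
    have hK : ∀ s : C, ∃ x ∈ BB h c S, (s : Set X) = seg c x := fun s => by
      obtain ⟨x, hx, e⟩ := hC s.2; exact ⟨x, hx, e.symm⟩
    choose x hxB hx using hK
    haveI : Nonempty C := hne.to_subtype
    have hcl : ∀ s : C, IsClosed {w ∈ BB h c S | x s ∈ seg c w} := fun s => by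
      refine hB.inter ?_
      have h9 := (open_not_mem_seg c (x s)).isClosed_compl
      have e9 : {w | x s ∉ seg c w}ᶜ = {w | x s ∈ seg c w} := by ext w; simp
      rw [e9] at h9; exact h9
    have hne' : (⋂ s : C, {w ∈ BB h c S | x s ∈ seg c w}).Nonempty := by
      refine IsCompact.nonempty_iInter_of_directed_nonempty_isCompact_isClosed _ ?_ ?_ (fun s => (hcl s).isCompact) hcl
      · intro s t
        rcases hchain.total s.2 t.2 with hst | hst
        · refine ⟨t, ?_, Subset.rfl⟩
          rintro w ⟨hw, hw2⟩
          refine ⟨hw, seg_trans ?_ hw2⟩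
          rw [← hx t]; apply hst; rw [hx s]; exact right_seg _ _
        · refine ⟨s, Subset.rfl, ?_⟩
          rintro w ⟨hw, hw2⟩
          refine ⟨hw, seg_trans ?_ hw2⟩
          rw [← hx s]; apply hst; rw [hx t]; exact right_seg _ _
      · intro s; exact ⟨x s, hxB s, right_seg _ _⟩
    obtain ⟨w, hw⟩ := hne'
    have hw' := mem_iInter.1 hw
    refine ⟨seg c w, mem_image_of_mem _ (hw' (Classical.arbitrary C)).1, fun s hs => ?_⟩
    have := (hw' ⟨s, hs⟩).2
    have e : s = seg c (x ⟨s, hs⟩) := hx ⟨s, hs⟩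
    rw [e]; exact seg_sub_seg (left_seg _ _) this) (seg c c) (mem_image_of_mem _ hcB)
  obtain ⟨p, hp, rfl⟩ := hmax.prop
  refine ⟨p, hp, fun y hy hpy => ?_⟩
  have h1 : seg c p ⊆ seg c y := seg_sub_seg (left_seg _ _) hpy
  have h2 := hmax.le_of_ge (mem_image_of_mem _ hy) h1
  exact seg_anti (h2 (right_seg _ _)) hpy

theorem BB_fix {h : X → X} (hh : Continuous h) {c : X} {S : Set X} (hSp : IsPreconnected S)
    (hinv : MapsTo h S S) {p : X} (hp : p ∈ BB h c S)
    (hmax : ∀ y ∈ BB h c S, p ∈ seg c y → y = p) : h p = p := by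
  by_contra hne
  have hpc : p ∈ seg c (h p) := hp.2 p (right_seg _ _)
  obtain ⟨v, hv, hvp, hvh⟩ := seg_acc (Ne.symm hne) (isOpen_compl_singleton (x := h p)) (Ne.symm hne)
  have hvc : v ∈ seg c (h p) := seg_sub_seg hpc (right_seg _ _) hv
  have hpv : p ∈ seg c v := by
    rcases seg_lin hpc hvc with h1 | h1
    · exact h1
    · exact absurd (seg_meet hpc h1 hv) hvp
  obtain ⟨O, hO, hhO, hw⟩ := open_mem_seg hvc hvh
  obtain ⟨O', hO', hpO', hsub, hconv⟩ := small_seg (hO.preimage hh) (d := p) hhO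
  obtain ⟨y, hy, hyp, hyO⟩ := seg_acc (Ne.symm hvp) hO' hpO'
  have hyc : y ∈ seg c v := seg_sub_seg hpv (right_seg _ _) hy
  have hpy : p ∈ seg c y := by
    rcases seg_lin hpv hyc with h1 | h1
    · exact h1
    · exact absurd (seg_meet hpv h1 hy) hyp
  refine hyp (hmax y ⟨?_, ?_⟩ hpy)
  · exact seg_sub hSp hp.1 (hinv hp.1) (seg_trans hy hv)
  · intro w hwy
    rw [seg_union hpy] at hwy
    rcases hwy with h1 | h1
    · exact hp.2 w h1
    · have h2 : w ∈ seg c v := seg_sub_seg hpv hyc h1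
      exact seg_trans h2 (hw _ (hsub (hconv _ hpO' _ hyO h1)))

theorem inv_piece {h : X → X} (hh : Continuous h) {c : X} (hper : h c ≠ c) {F : Set X} (hF : IsPreconnected F)
    (hinv : MapsTo h F F) (hcF : c ∈ F) :
    ∃ P ⊆ F, P.Nonempty ∧ IsPreconnected P ∧ MapsTo h P P ∧ c ∉ P := by
  obtain ⟨p, hp, hmax⟩ := BB_max hh c (isClosed_closure (s := F)) (subset_closure hcF)
  have hfix := BB_fix hh hF.closure (hinv.closure hh) hp hmax
  have hpc : p ≠ c := by rintro rfl; exact hper hfix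
  by_cases hpF : p ∈ F
  · refine ⟨{p}, singleton_subset_iff.2 hpF, singleton_nonempty _, isPreconnected_singleton, ?_, Ne.symm hpc⟩
    intro x hx; rw [mem_singleton_iff] at hx ⊢; subst hx; exact hfix
  have hcpF : ∀ y ∈ seg c p, y ≠ p → y ∈ F := by
    intro y hy hne
    have : IsPreconnected (insert p F) := hF.subset_closure (subset_insert _ _) (insert_subset hp.1 subset_closure)
    exact (seg_sub this (mem_insert_of_mem _ hcF) (mem_insert _ _) hy).resolve_left hne
  obtain ⟨y1, hy1, hy1p, -, hnb⟩ := NB hpc isOpen_univ (mem_univ p)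
  have hO : IsOpen (h ⁻¹' {w | y1 ∉ seg p w} ∩ {c}ᶜ) := ((open_not_mem_seg p y1).preimage hh).inter isOpen_compl_singleton
  have hpO : p ∈ h ⁻¹' {w | y1 ∉ seg p w} ∩ {c}ᶜ := by
    refine ⟨?_, hpc⟩
    show y1 ∉ seg p (h p)
    rw [hfix, seg_self]; exact hy1p
  obtain ⟨y2, hy2, hy2p, hsub, -⟩ := NB hy1p.symm hO hpO
  have hy2c : y2 ∈ seg p c := seg_trans hy2 hy1
  have hPc : ∀ y ∈ seg p y2 \ {p}, y ∈ seg c p := fun y hy => by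
    rw [seg_comm]; exact seg_trans hy.1 hy2c
  refine ⟨seg p y2 \ {p}, fun y hy => hcpF y (hPc y hy) hy.2, ⟨y2, right_seg _ _, hy2p⟩, pre_seg_diff _ _, ?_,
    fun hc => (hsub hc.1).2 rfl⟩
  intro y hy
  have hyF := hinv (hcpF y (hPc y hy) hy.2)
  have hne : h y ≠ p := fun e => hpF (e ▸ hyF)
  refine ⟨?_, hne⟩
  have h1 : h y ∈ seg p y1 := by
    rcases hnb (h y) (fun hc => hpF (seg_sub hF hyF hcF hc)) with h1 | h1
    · exact h1
    · exact absurd h1 (hsub hy.1).1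
  have h2 : h y ∈ seg c p := by rw [seg_comm]; exact seg_trans h1 hy1
  have h3 := seg_btw (hp.2 y (hPc y hy)) h2
  exact seg_sub_seg hy.1 (left_seg _ _) h3

def Good (f : X → X) (c : X) (p : ℕ) (J : Set X) : Prop :=
  1 ≤ p ∧ IsPreconnected J ∧ c ∈ J ∧ MapsTo f^[p] J J ∧ ∀ j, ¬ p ∣ j → Disjoint (f^[j] '' J) J

theorem Good_step {f : X → X} (hf : Continuous f) (hHS : ¬ HS f) {c : X} (hc : c ∈ chainRecurrentSet f)
    (hper : ∀ n, 1 ≤ n → f^[n] c ≠ c) {p : ℕ} {J : Set X} (hJ : Good f c p J) :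
    ∃ d, 2 ≤ d ∧ d ≤ tN X ∧ ∃ J', Good f c (p * d) J' := by
  classical
  obtain ⟨hp, hJp, hcJ, hJinv, hJd⟩ := hJ
  set h := f^[p] with hhdef
  have hh : Continuous h := hf.iterate p
  have hHSh : ¬ HS h := fun H => hHS (HS_iter hp H)
  obtain ⟨P, hPF, hPn, hPp, hPinv, hcP⟩ := inv_piece hh (hper p hp) (cU_pre hh c) (cU_inv h c) (cU_mem h c 0)
  have hnot : ¬ KE h P c (h^[1] c) := by
    intro hKE
    obtain ⟨w, hw⟩ := hPn
    obtain ⟨n, hn⟩ := mem_iUnion.1 (hPF hw)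
    exact disjoint_left.1 (hKE n) hn hw
  have hex := KLper hh hHSh hPp hPn hPinv (CR_iter hf hc) hcP
  have hd := Nat.find_spec hex
  have hmin := fun j => Nat.find_min hex (m := j)
  set d := Nat.find hex with hddef
  obtain ⟨hd1, hdN, hKE⟩ := hd
  have hd2 : 2 ≤ d := by
    by_contra! hlt
    have : d = 1 := by omega
    rw [this] at hKE; exact hnot hKE
  have hhd : Continuous h^[d] := hh.iterate d
  have hmul : ∀ k, h^[k] = f^[p * k] := fun k => (iterate_mul f p k).symm
  set J' := cU h^[d] c with hJ'
  have hJ'p : IsPreconnected J' := cU_pre hhd c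
  have hJ'inv : MapsTo h^[d] J' J' := cU_inv _ _
  have hJ'J : J' ⊆ J := by
    intro w hw
    obtain ⟨m, y, hy, rfl⟩ := mem_iUnion.1 hw
    exact (hJinv.iterate d).iterate m (seg_sub hJp hcJ (hJinv.iterate d hcJ) hy)
  have hcJ' : c ∈ J' := cU_mem _ _ 0
  have hr : ∀ r, 0 < r → r < d → Disjoint (h^[r] '' J') J' := by
    intro r hr0 hrd
    by_contra hcon
    obtain ⟨w, hw1, hw2⟩ := not_disjoint_iff.1 hcon
    apply hmin r hrd
    refine ⟨hr0, by omega, fun n => ?_⟩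
    have hU : IsPreconnected (h^[r] '' J' ∪ J') := IsPreconnected.union w hw1 hw2
      (hJ'p.image _ (hh.iterate r).continuousOn) hJ'p
    have hsub := seg_sub hU (Or.inr hcJ') (Or.inl (mem_image_of_mem _ hcJ'))
    refine Disjoint.mono_left (image_mono hsub) ?_
    rw [image_union, ← image_comp, ← iterate_add]
    exact (cU_KE hKE (n + r)).union_left (cU_KE hKE n)
  refine ⟨d, hd2, hdN, J', Nat.mul_pos hp (by omega), hJ'p, hcJ', ?_, fun j hj => ?_⟩
  · rw [← hmul]; exact hJ'inv
  · by_cases hpj : p ∣ j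
    · obtain ⟨k, rfl⟩ := hpj
      have hdk : ¬ d ∣ k := fun h => hj (mul_dvd_mul_left p h)
      have h1 : 0 < k % d := Nat.pos_of_ne_zero fun e => hdk (Nat.dvd_of_mod_eq_zero e)
      rw [← hmul]
      refine Disjoint.mono_left ?_ (hr (k % d) h1 (Nat.mod_lt _ (by omega)))
      rintro _ ⟨w, hw, rfl⟩
      refine ⟨(h^[d])^[k / d] w, hJ'inv.iterate _ hw, ?_⟩
      rw [← iterate_mul h d, ← iterate_add_apply h, Nat.mod_add_div]
    · exact (hJd j hpj).mono (image_mono hJ'J) hJ'J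

theorem Pat_np {f : X → X} (hf : Continuous f) (hHS : ¬ HS f) {A B : Set X} {c : X}
    (hc : ∀ x ∈ A, ∀ y ∈ B, c ∈ seg x y) (hcCR : c ∈ chainRecurrentSet f)
    (hper : ∀ n, 1 ≤ n → f^[n] c ≠ c) {I : Finset ℕ} (hI : Pat f A B I) :
    I.card ≤ tN X * (tN X).factorial + 1 := by
  classical
  by_contra! hcard
  have h1 : 1 < I.card := by omega
  obtain ⟨a, ha, b, hb, hab⟩ := Finset.one_lt_card.1 h1
  set S : Set ℕ := {p | (∃ J, Good f c p J) ∧ ∀ t ∈ I, ∀ t' ∈ I, t ≡ t' [MOD p]} with hS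
  have hS1 : 1 ∈ S := ⟨⟨univ, le_rfl, isPreconnected_univ, trivial, fun _ _ => trivial,
    fun j hj => absurd (one_dvd j) hj⟩, fun t _ t' _ => Nat.modEq_one⟩
  have hbdd : ∀ p ∈ S, p ≤ a + b := by
    rintro p ⟨-, hp⟩
    by_contra! hlt
    exact hab (Nat.ModEq.eq_of_lt_of_lt (hp a ha b hb) (by omega) (by omega))
  obtain ⟨p, hpS, hpmax⟩ := Set.exists_max_image S id ((finite_le_nat (a + b)).subset hbdd) ⟨1, hS1⟩
  obtain ⟨⟨J0, hJ0⟩, hcong⟩ := hpS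
  obtain ⟨d, hd2, hdN, J, hJ⟩ := Good_step hf hHS hcCR hper hJ0
  have hp1 : 1 ≤ p := hJ0.1
  have hnot : ∃ t ∈ I, ∃ t' ∈ I, ¬ t ≡ t' [MOD p * d] := by
    by_contra! hcon
    have := hpmax (p * d) ⟨⟨J, hJ⟩, hcon⟩
    simp only [id] at this
    nlinarith
  have hfac := Nat.factorial_pos (tN X)
  have hpos : 0 < d * (tN X).factorial := Nat.mul_pos (by omega) hfac
  obtain ⟨t2, ht2, t3, ht3, hlt, e⟩ := pigeon_lt (I := I) (m := d * (tN X).factorial)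
    (fun t => (t / p) % (d * (tN X).factorial)) (fun t _ => Nat.mod_lt _ hpos)
    (by have := Nat.mul_le_mul_right (tN X).factorial hdN; omega)
  have hdvd : p * d * (tN X).factorial ∣ t3 - t2 := by
    have e1 : t2 / p ≡ t3 / p [MOD d * (tN X).factorial] := e
    have e2 : t2 ≡ t3 [MOD p] := hcong t2 ht2 t3 ht3
    obtain ⟨k, hk⟩ := (Nat.modEq_iff_dvd' (Nat.div_le_div_right hlt.le)).1 e1
    refine ⟨k, ?_⟩
    have h2 := Nat.div_add_mod t2 p
    have h3 := Nat.div_add_mod t3 p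
    have e3 : t2 % p = t3 % p := e2
    have h4 : t3 - t2 = p * (t3 / p - t2 / p) := by
      rw [Nat.mul_sub]; omega
    rw [h4, hk]; ring
  obtain ⟨hq1, hJp, hcJ, hJinv, hJd⟩ := hJ
  set q := p * d with hq
  have e23 : t2 ≡ t3 [MOD q] := (Nat.modEq_iff_dvd' hlt.le).2 (dvd_trans (dvd_mul_right _ _) hdvd)
  obtain ⟨t1, ht1, h12⟩ : ∃ t1 ∈ I, ¬ t1 ≡ t2 [MOD q] := by
    obtain ⟨t, ht, t', ht', hne⟩ := hnot
    by_cases h : t ≡ t2 [MOD q]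
    · exact ⟨t', ht', fun h' => hne (h.trans h'.symm)⟩
    · exact ⟨t, ht, h⟩
  have hle : t2 ≤ q * t2 := Nat.le_mul_of_pos_left _ hq1
  set r := t1 + (q * t2 - t2) with hr
  have hrt : r + t2 = q * t2 + t1 := by omega
  have hqr : ¬ q ∣ r := by
    rintro ⟨k, hk⟩
    apply h12
    have : q * k + t2 ≡ q * t2 + t1 [MOD q] := by rw [← hk, hrt]
    have h5 : q * k + t2 ≡ t2 [MOD q] := by simp [Nat.ModEq]
    have h6 : q * t2 + t1 ≡ t1 [MOD q] := by simp [Nat.ModEq]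
    exact h6.symm.trans (this.symm.trans h5)
  have hJr : IsPreconnected (f^[r] '' J) := hJp.image _ (hf.iterate r).continuousOn
  have hcJr : c ∉ f^[r] '' J := fun h => disjoint_left.1 (hJd r hqr) h hcJ
  have hJrinv : MapsTo f^[q] (f^[r] '' J) (f^[r] '' J) := by
    rintro _ ⟨w, hw, rfl⟩
    refine ⟨_, hJinv hw, ?_⟩
    rw [← iterate_add_apply, ← iterate_add_apply, add_comm]
  have hland : ∀ z ∈ chainRecurrentSet f, f^[t2] z ∈ J → f^[t1] z ∈ f^[r] '' J := by
    intro z hz hzJ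
    refine lemHn (hf.iterate q) (fun H => hHS (HS_iter hq1 H)) (CR_iter hf (CR_it hf hz t1)) hJr hJrinv t2 ?_
    refine ⟨_, hzJ, ?_⟩
    rw [← iterate_mul, ← iterate_add_apply, ← iterate_add_apply, hrt]
  have hne12 : t1 ≠ t2 := fun e => h12 (e ▸ Nat.ModEq.refl _)
  have hne13 : t1 ≠ t3 := fun e => h12 (e ▸ e23.symm)
  set σ : Bool := decide (Disjoint (f^[r] '' J) A) with hσ
  obtain ⟨z, hz, hpat⟩ := hI fun t => if t = t1 then σ else decide (t = t2)
  have k1 := hpat t1 ht1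
  have k2 := hpat t2 ht2
  have k3 := hpat t3 ht3
  simp only [if_true] at k1
  rw [if_neg hne12.symm] at k2
  rw [if_neg hne13.symm] at k3
  simp only [decide_true, if_true] at k2
  rw [if_neg (by simpa using (by omega : t3 ≠ t2))] at k3
  have hzJ : f^[t2] z ∉ J := by
    intro hzJ
    have hz1 := hland z hz hzJ
    by_cases hd : Disjoint (f^[r] '' J) A
    · have : σ = true := by simp [hσ, hd]
      rw [this, if_pos rfl] at k1
      exact disjoint_left.1 hd hz1 k1
    · have : σ = false := by simp [hσ, hd]
      rw [this, if_neg (by simp)] at k1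
      obtain ⟨x, hx, hxA⟩ := not_disjoint_iff.1 hd
      exact hcJr (seg_sub hJr hx hz1 (hc x hxA _ k1))
  have := lemA hf hHS hq1 hJp ⟨c, hcJ⟩ hJinv (CR_it hf hz t2) hzJ (c := c) (n := 0) hcJ hdvd
  rw [← iterate_add_apply, Nat.sub_add_cancel hlt.le] at this
  exact this (hc _ k2 _ k3)

theorem pairBound {f : X → X} (hf : Continuous f) (hHS : ¬ HS f) {A B : Set X} {c : X}
    (hc : ∀ x ∈ A, ∀ y ∈ B, c ∈ seg x y) (hcA : c ∉ A) :
    ∃ D, ∀ I : Finset ℕ, Pat f A B I → I.card ≤ D := by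
  by_cases hcCR : c ∈ chainRecurrentSet f
  · by_cases hper : ∃ m, 1 ≤ m ∧ f^[m] c = c
    · obtain ⟨m, hm, hm2⟩ := hper
      exact ⟨_, fun I hI => Pat_per hf hHS hc hcA hm hm2 hI⟩
    · push Not at hper
      exact ⟨_, fun I hI => Pat_np hf hHS hc hcCR hper hI⟩
  · exact Pat_nonCR hf hHS hc hcCR
end NP

end Bh

section Bi
section WD
def Sht {α : Type*} (val : ℕ → α → Bool → Prop) (S : Set α) (J : Finset ℕ) : Prop :=
  ∀ s : ℕ → Bool, ∃ y ∈ S, ∀ t ∈ J, val t y (s t)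

theorem Sht.mono {α : Type*} {val : ℕ → α → Bool → Prop} {S S' : Set α} {J : Finset ℕ}
    (h : Sht val S J) (hS : S ⊆ S') : Sht val S' J :=
  fun s => (h s).imp fun y hy => ⟨hS hy.1, hy.2⟩

open Classical in
theorem words {α : Type*} (val : ℕ → α → Bool → Prop) (hval : ∀ t y b, val t y b → ¬ val t y (!b))
    (R : Finset ℕ) : ∀ (e : ℕ) (S : Set α), (R.powerset.filter (Sht val S)).card < 2 ^ e →
    ∃ W : Finset (ℕ → Bool), W.card ≤ (R.card + 1) ^ e ∧ ∀ y ∈ S, ∃ w ∈ W, ∀ t ∈ R, ¬ val t y (!(w t)) := by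
  induction R using Finset.induction_on with
  | empty =>
    intro e S _
    exact ⟨{fun _ => true}, by simp, fun y _ => ⟨_, Finset.mem_singleton_self _, by simp⟩⟩
  | insert r R hr ih =>
    intro e S hS
    rcases Nat.eq_zero_or_pos e with rfl | he
    · refine ⟨∅, by simp, fun y hy => ?_⟩
      exfalso
      rw [pow_zero, Nat.lt_one_iff, Finset.card_eq_zero] at hS
      have : (∅ : Finset ℕ) ∈ (insert r R).powerset.filter (Sht val S) := by
        simp only [Finset.mem_filter, Finset.mem_powerset, Finset.empty_subset, true_and]
        exact fun s => ⟨y, hy, by simp⟩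
      rw [hS] at this; simp at this
    obtain ⟨k, rfl⟩ := Nat.exists_eq_add_of_le' he
    set Sb : Bool → Set α := fun b => {y ∈ S | val r y b} with hSb
    set F : Set α → Finset (Finset ℕ) := fun S => R.powerset.filter (Sht val S) with hF
    have hsum : (F (Sb true)).card + (F (Sb false)).card ≤ ((insert r R).powerset.filter (Sht val S)).card := by
      rw [← Finset.card_union_add_card_inter]
      have hinj : Set.InjOn (insert r) ((F (Sb true) ∩ F (Sb false) : Finset (Finset ℕ)) : Set (Finset ℕ)) := by
        intro J hJ J' hJ' e
        have h1 : r ∉ J := fun h => hr (by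
          have := (Finset.mem_inter.1 hJ).1
          exact Finset.mem_powerset.1 (Finset.mem_filter.1 this).1 h)
        have h2 : r ∉ J' := fun h => hr (by
          have := (Finset.mem_inter.1 hJ').1
          exact Finset.mem_powerset.1 (Finset.mem_filter.1 this).1 h)
        have e' : insert r J = insert r J' := e
        rw [← Finset.erase_insert h1, e', Finset.erase_insert h2]
      rw [← Finset.card_image_of_injOn hinj, ← Finset.card_union_of_disjoint]
      · refine Finset.card_le_card fun J hJ => ?_
        simp only [hF, Finset.mem_union, Finset.mem_image, Finset.mem_inter, Finset.mem_filter, Finset.mem_powerset] at hJ ⊢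
        rcases hJ with (⟨h1, h2⟩ | ⟨h1, h2⟩) | ⟨J', ⟨⟨h1, h2⟩, -, h3⟩, rfl⟩
        · exact ⟨h1.trans (Finset.subset_insert _ _), h2.mono fun y hy => hy.1⟩
        · exact ⟨h1.trans (Finset.subset_insert _ _), h2.mono fun y hy => hy.1⟩
        · refine ⟨Finset.insert_subset_insert _ h1, fun s => ?_⟩
          have : Sht val (Sb (s r)) J' := by cases s r <;> assumption
          obtain ⟨y, hy, h⟩ := this s
          refine ⟨y, hy.1, fun t ht => ?_⟩
          rcases Finset.mem_insert.1 ht with rfl | ht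
          · exact hy.2
          · exact h t ht
      · rw [Finset.disjoint_left]
        intro J hJ hJ'
        obtain ⟨J', -, rfl⟩ := Finset.mem_image.1 hJ'
        simp only [hF, Finset.mem_union, Finset.mem_filter, Finset.mem_powerset] at hJ
        rcases hJ with h | h
        · exact hr (h.1 (Finset.mem_insert_self _ _))
        · exact hr (h.1 (Finset.mem_insert_self _ _))
    obtain ⟨b, hb⟩ : ∃ b, (F (Sb b)).card < 2 ^ k := by
      by_contra! hcon
      have h1 := hcon true
      have h2 := hcon false
      rw [pow_succ] at hS
      omega
    obtain ⟨W1, hW1, h1⟩ := ih k (Sb b) hb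
    obtain ⟨W2, hW2, h2⟩ := ih (k + 1) (S \ Sb b) (lt_of_le_of_lt (Finset.card_le_card (by
      intro J hJ
      simp only [Finset.mem_filter, Finset.mem_powerset] at hJ ⊢
      exact ⟨hJ.1.trans (Finset.subset_insert _ _), hJ.2.mono diff_subset⟩)) hS)
    refine ⟨W1.image (fun w => Function.update w r b) ∪ W2.image (fun w => Function.update w r (!b)), ?_, ?_⟩
    · refine (Finset.card_union_le _ _).trans ((add_le_add Finset.card_image_le Finset.card_image_le).trans
        ((add_le_add hW1 hW2).trans ?_))
      rw [Finset.card_insert_of_notMem hr]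
      have h3 : (R.card + 1) ^ k ≤ (R.card + 1 + 1) ^ k := Nat.pow_le_pow_left (by omega) k
      rw [pow_succ, pow_succ]
      nlinarith
    · intro y hy
      by_cases hyb : y ∈ Sb b
      · obtain ⟨w, hw, h⟩ := h1 y hyb
        refine ⟨_, Finset.mem_union_left _ (Finset.mem_image_of_mem _ hw), fun t ht => ?_⟩
        by_cases htr : t = r
        · subst htr; simpa using hval _ _ _ hyb.2
        · rw [Function.update_of_ne htr]
          exact h t ((Finset.mem_insert.1 ht).resolve_left htr)
      · obtain ⟨w, hw, h⟩ := h2 y ⟨hy, hyb⟩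
        refine ⟨_, Finset.mem_union_right _ (Finset.mem_image_of_mem _ hw), fun t ht => ?_⟩
        by_cases htr : t = r
        · subst htr; simpa using fun h => hyb ⟨hy, h⟩
        · rw [Function.update_of_ne htr]
          exact h t ((Finset.mem_insert.1 ht).resolve_left htr)

theorem small_subsets (R : Finset ℕ) (D : ℕ) (G : Finset (Finset ℕ)) (hG : G ⊆ R.powerset)
    (hD : ∀ J ∈ G, J.card ≤ D) : G.card ≤ (R.card + 1) ^ D := by
  classical
  have h1 : G ⊆ (Finset.range (D + 1)).biUnion fun k => R.powersetCard k := by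
    intro J hJ
    rw [Finset.mem_biUnion]
    exact ⟨J.card, Finset.mem_range.2 (Nat.lt_succ_of_le (hD J hJ)),
      Finset.mem_powersetCard.2 ⟨Finset.mem_powerset.1 (hG hJ), rfl⟩⟩
  refine (Finset.card_le_card h1).trans (Finset.card_biUnion_le.trans ?_)
  rw [add_pow]
  refine Finset.sum_le_sum fun k hk => ?_
  rw [Finset.card_powersetCard, one_pow, mul_one]
  have h2 : 1 ≤ D.choose k := Nat.choose_pos (by have := Finset.mem_range.1 hk; omega)
  calc R.card.choose k ≤ R.card ^ k := Nat.choose_le_pow _ _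
    _ = R.card ^ k * 1 := (mul_one _).symm
    _ ≤ _ := Nat.mul_le_mul_left _ h2
end WD

section CT
universe v
variable {X : Type v} [MetricSpace X] [TA X]

theorem pairWords {f : X → X} (hf : Continuous f) (hHS : ¬ HS f) {A B : Set X} {c : X}
    (hc : ∀ x ∈ A, ∀ y ∈ B, c ∈ seg x y) (hcA : c ∉ A) {Y : Set X} (hY : Y ⊆ chainRecurrentSet f) :
    ∃ D : ℕ, ∀ R : Finset ℕ, ∃ W : Finset (ℕ → Bool),
      W.card ≤ (R.card + 1) ^ (D * (Nat.log 2 (R.card + 1) + 1)) ∧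
      ∀ y ∈ Y, ∃ w ∈ W, ∀ t ∈ R, f^[t] y ∉ (if (!(w t)) = true then A else B) := by
  classical
  obtain ⟨D, hD⟩ := pairBound hf hHS hc hcA
  refine ⟨D + 1, fun R => ?_⟩
  set L := Nat.log 2 (R.card + 1) + 1 with hL
  obtain ⟨W, hW, h⟩ := words (fun t y b => f^[t] y ∈ (if b = true then A else B)) (by
    intro t y b h1 h2
    have key : ∀ w, w ∈ A → w ∈ B → False := fun w h1 h2 => by
      have := hc w h1 w h2
      rw [seg_self, mem_singleton_iff] at this
      exact hcA (this ▸ h1)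
    cases b
    · exact key _ (by simpa using h2) (by simpa using h1)
    · exact key _ (by simpa using h1) (by simpa using h2)) R ((D + 1) * L) Y (by
    have h1 := small_subsets R D (R.powerset.filter (Sht (fun t y b => f^[t] y ∈ (if b = true then A else B)) Y))
      (Finset.filter_subset _ _) (fun J hJ => hD J fun s => by
        obtain ⟨y, hy, h⟩ := (Finset.mem_filter.1 hJ).2 s
        exact ⟨y, hY hy, h⟩)
    refine lt_of_le_of_lt h1 ?_
    have h2 : R.card + 1 < 2 ^ L := Nat.lt_pow_succ_log_self (by norm_num) _
    calc (R.card + 1) ^ D ≤ (2 ^ L) ^ D := Nat.pow_le_pow_left h2.le _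
      _ = 2 ^ (L * D) := (pow_mul _ _ _).symm
      _ < 2 ^ ((D + 1) * L) := Nat.pow_lt_pow_right (by norm_num) (by
          have : 1 ≤ L := by omega
          nlinarith))
  exact ⟨W, hW, h⟩

theorem sep_pairs {x y : X} (hne : x ≠ y) : ∃ (c : X) (A B : Set X), IsOpen A ∧ IsOpen B ∧ x ∈ A ∧ y ∈ B ∧
    c ∉ A ∧ ∀ u ∈ A, ∀ v ∈ B, c ∈ seg u v := by
  obtain ⟨c, hc, hcx, hcy⟩ := seg_acc hne (isOpen_compl_singleton (x := y)) hne
  refine ⟨c, {w | c ∉ seg x w}, {w | c ∉ seg y w}, open_not_mem_seg _ _, open_not_mem_seg _ _, ?_, ?_, ?_, ?_⟩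
  · show c ∉ seg x x
    rw [seg_self]; exact hcx
  · show c ∉ seg y y
    rw [seg_self]; exact hcy
  · exact fun h => h (right_seg _ _)
  · intro u hu v hv
    rcases seg_sub_union x u y hc with h | h
    · exact absurd h hu
    · rcases seg_sub_union u v y h with h | h
      · exact h
      · rw [seg_comm] at h; exact absurd h hv

theorem countBound {f : X → X} (hf : Continuous f) (hHS : ¬ HS f) {Y : Set X} (hY : Y ⊆ chainRecurrentSet f)
    (hYc : IsClosed Y) (hYi : MapsTo f Y Y) (𝒰 : Finset (Set X)) (hU : IsOpenCoverOn Y 𝒰) :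
    ∃ C : ℕ, ∀ a : ℕ → ℕ, StrictMono a → ∀ n, seqCoverCountOn f Y a 𝒰 n ≤ (n + 1) ^ (C * (Nat.log 2 (n + 1) + 1)) := by
  classical
  obtain ⟨ε, hε, hleb⟩ := lebesgue_number_lemma_of_metric_sUnion hYc.isCompact (c := (𝒰 : Set (Set X))) hU.1 hU.2
  set K : Set (X × X) := (Y ×ˢ Y) ∩ {q | ε ≤ dist q.1 q.2} with hK
  have hKc : IsCompact K := by
    refine IsClosed.isCompact ((hYc.prod hYc).inter (isClosed_le continuous_const (continuous_fst.dist continuous_snd)))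
  have hsep : ∀ q : X × X, ∃ (c : X) (A B : Set X), q ∈ K → IsOpen A ∧ IsOpen B ∧ q.1 ∈ A ∧ q.2 ∈ B ∧
    c ∉ A ∧ ∀ u ∈ A, ∀ v ∈ B, c ∈ seg u v := by
    intro q
    by_cases hq : q ∈ K
    · have : q.1 ≠ q.2 := fun e => by
        have h2 : ε ≤ dist q.1 q.2 := hq.2
        rw [e, dist_self] at h2; linarith
      obtain ⟨c, A, B, h⟩ := sep_pairs this
      exact ⟨c, A, B, fun _ => h⟩
    · exact ⟨q.1, ∅, ∅, fun h => absurd h hq⟩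
  choose c A B hAB using hsep
  obtain ⟨T, hTK, hcov⟩ := hKc.elim_nhds_subcover (fun q => A q ×ˢ B q) (fun q hq => by
    obtain ⟨h1, h2, h3, h4, -⟩ := hAB q hq
    exact (h1.prod h2).mem_nhds ⟨h3, h4⟩)
  have hpw : ∀ q : T, ∃ D : ℕ, ∀ R : Finset ℕ, ∃ W : Finset (ℕ → Bool),
      W.card ≤ (R.card + 1) ^ (D * (Nat.log 2 (R.card + 1) + 1)) ∧
      ∀ y ∈ Y, ∃ w ∈ W, ∀ t ∈ R, f^[t] y ∉ (if (!(w t)) = true then A q else B q) := fun q => by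
    obtain ⟨-, -, -, -, h5, h6⟩ := hAB q (hTK q q.2)
    exact pairWords hf hHS h6 h5 hY
  choose D hD using hpw
  refine ⟨∑ q, D q, fun a ha n => ?_⟩
  set R := (Finset.range n).image a with hR
  have hRn : R.card = n := by rw [hR, Finset.card_image_of_injective _ ha.injective, Finset.card_range]
  choose W hW hWY using fun q => hD q R
  simp only [hRn] at hW
  let Yw : ((q : T) → W q) → Set X := fun ω => {y ∈ Y | ∀ q : T, ∀ t ∈ R,
    f^[t] y ∉ (if (!((ω q).1 t)) = true then A q else B q)}
  have hclose : ∀ ω, ∀ y ∈ Yw ω, ∀ y' ∈ Yw ω, ∀ t ∈ R, dist (f^[t] y') (f^[t] y) < ε := by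
    intro ω y hy y' hy' t ht
    by_contra! hcon
    obtain ⟨q, hqT, hqA, hqB⟩ := mem_iUnion₂.1 (hcov (show (f^[t] y', f^[t] y) ∈ K from
      ⟨⟨hYi.iterate t hy'.1, hYi.iterate t hy.1⟩, hcon⟩))
    have h1 := hy'.2 ⟨q, hqT⟩ t ht
    have h2 := hy.2 ⟨q, hqT⟩ t ht
    cases hb : (ω ⟨q, hqT⟩).1 t
    · rw [hb] at h1; exact h1 (by simpa using hqA)
    · rw [hb] at h2; exact h2 (by simpa using hqB)
  let Ω := {ω : (q : T) → W q // (Yw ω).Nonempty}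
  have hch : ∀ ω : Ω, ∀ i : Fin n, ∃ U ∈ 𝒰, ∀ y ∈ Yw ω.1, f^[a i.1] y ∈ U := by
    intro ω i
    obtain ⟨y, hy⟩ := ω.2
    obtain ⟨U, hU', hball⟩ := hleb (f^[a i.1] y) (hYi.iterate _ hy.1)
    refine ⟨U, hU', fun y' hy' => hball ?_⟩
    exact hclose ω.1 y hy y' hy' _ (Finset.mem_image_of_mem _ (Finset.mem_range.2 i.2))
  choose U hUm hUs using hch
  let e := Fintype.equivFin Ω
  have hle : seqCoverCountOn f Y a 𝒰 n ≤ Fintype.card Ω := by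
    refine Nat.sInf_le ⟨fun j i => U (e.symm j) i, fun j i => hUm _ _, fun y hy => ?_⟩
    choose ω hω hωY using fun q : T => hWY q y hy
    have hy' : y ∈ Yw fun q => ⟨ω q, hω q⟩ := ⟨hy, fun q t ht => hωY q t ht⟩
    refine mem_iUnion.2 ⟨e ⟨_, ⟨y, hy'⟩⟩, mem_iInter.2 fun i => ?_⟩
    show f^[a i.1] y ∈ U (e.symm (e _)) i
    rw [Equiv.symm_apply_apply]
    exact hUs _ i y hy'
  refine hle.trans ((Fintype.card_subtype_le _).trans ?_)
  rw [Fintype.card_pi]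
  simp only [Fintype.card_coe]
  refine (Finset.prod_le_prod' fun q _ => hW q).trans ?_
  rw [Finset.prod_pow_eq_pow_sum, Finset.sum_mul]

theorem tends_aux (C : ℕ) : Tendsto (fun n : ℕ => (8 * C : ℝ) * (Real.log (n + 1) ^ 2 / (n + 1))) atTop (𝓝 0) := by
  have h1 := (Real.isLittleO_pow_log_id_atTop (n := 2)).tendsto_div_nhds_zero
  have h2 : Tendsto (fun n : ℕ => (n : ℝ) + 1) atTop atTop :=
    tendsto_atTop_add_const_right _ _ tendsto_natCast_atTop_atTop
  have h3 := (h1.comp h2).const_mul (8 * C : ℝ)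
  rw [mul_zero] at h3
  exact h3

theorem log_aux (C n N : ℕ) (hn : 1 ≤ n) (hN : N ≤ (n + 1) ^ (C * (Nat.log 2 (n + 1) + 1))) :
    Real.log N / n ≤ (8 * C : ℝ) * (Real.log (n + 1) ^ 2 / (n + 1)) := by
  have hnR : (1 : ℝ) ≤ n := by exact_mod_cast hn
  have hl2 : (1/2 : ℝ) ≤ Real.log 2 := by linarith [Real.log_two_gt_d9]
  have hl : Real.log 2 ≤ Real.log (n + 1) := Real.log_le_log (by norm_num) (by linarith)
  have hlp : 0 ≤ Real.log (n + 1) := by linarith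
  have h1 : Real.log N ≤ (C * (Nat.log 2 (n + 1) + 1) : ℕ) * Real.log (n + 1) := by
    rcases Nat.eq_zero_or_pos N with rfl | hpos
    · simp only [Nat.cast_zero, Real.log_zero]; positivity
    · have : (N : ℝ) ≤ ((n : ℝ) + 1) ^ (C * (Nat.log 2 (n + 1) + 1)) := by exact_mod_cast hN
      have := Real.log_le_log (by exact_mod_cast hpos) this
      rwa [Real.log_pow] at this
  have h2 : (Nat.log 2 (n + 1) : ℝ) * Real.log 2 ≤ Real.log (n + 1) := by
    have : (2 : ℝ) ^ Nat.log 2 (n + 1) ≤ n + 1 := by exact_mod_cast Nat.pow_log_le_self 2 (by omega)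
    have := Real.log_le_log (by positivity) this
    rwa [Real.log_pow] at this
  have h3 : (Nat.log 2 (n + 1) : ℝ) + 1 ≤ 4 * Real.log (n + 1) := by
    have h0 : (0:ℝ) ≤ Nat.log 2 (n + 1) := Nat.cast_nonneg _
    nlinarith
  have h4 : Real.log N ≤ 4 * C * Real.log (n + 1) ^ 2 := by
    refine h1.trans ?_
    push_cast
    have hC : (0:ℝ) ≤ C := Nat.cast_nonneg _
    calc (C : ℝ) * (Nat.log 2 (n + 1) + 1) * Real.log (n + 1) ≤ C * (4 * Real.log (n + 1)) * Real.log (n + 1) := by gcongr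
      _ = _ := by ring
  rw [div_le_iff₀ (by linarith)]
  refine h4.trans ?_
  rw [mul_assoc, mul_assoc, div_mul_eq_mul_div]
  have h5 : Real.log (n + 1) ^ 2 ≤ 2 * (Real.log (n + 1) ^ 2 * n / (n + 1)) := by
    rw [← mul_div_assoc, le_div_iff₀ (by linarith)]
    nlinarith [sq_nonneg (Real.log (n + 1))]
  have hC : (0:ℝ) ≤ C := Nat.cast_nonneg _
  nlinarith [mul_le_mul_of_nonneg_left h5 hC]

theorem genZero {f : X → X} (hf : Continuous f) (hHS : ¬ HS f) {Y : Set X} (hY : Y ⊆ chainRecurrentSet f)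
    (hYc : IsClosed Y) (hYi : MapsTo f Y Y) : supSeqEntropyOn f Y = 0 := by
  simp only [supSeqEntropyOn, seqEntropyOn, ENNReal.iSup_eq_zero]
  intro a ha _ 𝒰 hU
  obtain ⟨C, hC⟩ := countBound hf hHS hY hYc hYi 𝒰 hU
  refine Tendsto.limsup_eq ?_
  have h1 := ENNReal.tendsto_ofReal (tends_aux C)
  rw [ENNReal.ofReal_zero] at h1
  refine tendsto_of_tendsto_of_tendsto_of_le_of_le' tendsto_const_nhds h1 (Eventually.of_forall fun _ => zero_le) ?_
  filter_upwards [eventually_ge_atTop 1] with n hn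
  exact ENNReal.ofReal_le_ofReal (log_aux C n _ hn (hC a ha n))
end CT

end Bi

section FIN9
universe v
variable {X : Type v} [MetricSpace X]

theorem om_visit {f : X → X} {x y : X} (h : y ∈ omegaLimitSet f x) {W : Set X} (hW : IsOpen W) (hy : y ∈ W) (n : ℕ) :
    ∃ k ≥ n, f^[k] x ∈ W := by
  obtain ⟨z, hz, k, hk, rfl⟩ := mem_closure_iff.1 (mem_iInter.1 h n) W hW hy
  exact ⟨k, hk, hz⟩

theorem om_of_visit {f : X → X} {x y : X} (h : ∀ W : Set X, IsOpen W → y ∈ W → ∀ n, ∃ k ≥ n, f^[k] x ∈ W) :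
    y ∈ omegaLimitSet f x := by
  refine mem_iInter.2 fun n => mem_closure_iff.2 fun W hW hy => ?_
  obtain ⟨k, hk, hw⟩ := h W hW hy n
  exact ⟨_, hw, k, hk, rfl⟩

theorem om_inv {f : X → X} (hf : Continuous f) : MapsTo f (omegaSet f) (omegaSet f) := by
  intro y hy
  obtain ⟨x, hx⟩ := mem_iUnion.1 hy
  refine mem_iUnion.2 ⟨x, om_of_visit fun W hW hyW n => ?_⟩
  obtain ⟨k, hk, h⟩ := om_visit hx (hW.preimage hf) hyW n
  exact ⟨k + 1, by omega, by rw [iterate_succ_apply']; exact h⟩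

theorem nw_inv {f : X → X} (hf : Continuous f) : MapsTo f (nonWanderingSet f) (nonWanderingSet f) := by
  intro x hx U hU hxU
  obtain ⟨n, hn, z, hz1, hz2⟩ := hx _ (hU.preimage hf) hxU
  refine ⟨n, hn, f z, ?_, hz2⟩
  show f^[n] (f z) ∈ U
  rw [← iterate_succ_apply, iterate_succ_apply']; exact hz1

theorem nw_closed {f : X → X} : IsClosed (nonWanderingSet f) := by
  refine closure_subset_iff_isClosed.1 fun x hx U hU hxU => ?_
  obtain ⟨y, hyU, hy⟩ := mem_closure_iff.1 hx U hU hxU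
  exact hy U hU hyU

theorem per_om {f : X → X} {c : X} {n : ℕ} (hn : 1 ≤ n) (h : f^[n] c = c) : c ∈ omegaSet f := by
  refine mem_iUnion.2 ⟨c, om_of_visit fun W hW hyW m => ⟨n * m, by nlinarith, ?_⟩⟩
  rw [iterate_mul, iterate_fixed h]; exact hyW

variable [TA X]

theorem sub_side {c y0 x : X} {C : Set X} (hC : IsPreconnected C) (hc : c ∉ C) (hx : x ∈ C) (hxD : c ∉ seg y0 x) :
    ∀ y ∈ C, c ∉ seg y0 y := fun y hy h => by
  rcases seg_sub_union y0 x y h with h | h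
  · exact hxD h
  · exact hc (seg_sub hC hx hy h)

/-- key claim -/
theorem om_claim {f : X → X} (hf : Continuous f) {c y0 b : X} (hnp : ∀ n, 1 ≤ n → f^[n] c ≠ c)
    (hb : ∀ x, c ∉ seg y0 x → x ∈ seg c b ∨ b ∈ seg c x) (hbc : b ≠ c)
    (hcl : c ∈ closure (omegaSet f ∩ {w | c ∉ seg y0 w})) :
    ∃ k, 1 ≤ k ∧ c ∈ f^[k] '' seg c b ∧ ∃ z ∈ f^[k] '' seg c b, c ∉ seg y0 z := by
  by_contra hcon
  push Not at hcon
  set I := seg c b with hI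
  have hcI : ∀ k z, 1 ≤ k → z ∈ f^[k] '' I → c ∉ seg y0 z → c ∉ f^[k] '' I :=
    fun k z hk hz hD hc => hD (hcon k hk hc z hz)
  have hpre : ∀ k, IsPreconnected (f^[k] '' I) := fun k => (segP c b).image _ (hf.iterate k).continuousOn
  have hside : ∀ k z, 1 ≤ k → z ∈ f^[k] '' I → c ∉ seg y0 z → ∀ y ∈ f^[k] '' I, c ∉ seg y0 y :=
    fun k z hk hz hD => sub_side (hpre k) (hcI k z hk hz hD) hz hD
  have hret : ∀ n : ℕ, ∃ k, n < k ∧ ∃ q ∈ f^[k] '' I, q ∈ I ∧ c ∉ seg y0 q ∧ dist q c < 1 / ((n : ℝ) + 1) := by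
    intro n
    have hO : IsOpen ({w | b ∉ seg c w} ∩ Metric.ball c (1 / ((n : ℝ) + 1))) :=
      (open_not_mem_seg c b).inter Metric.isOpen_ball
    obtain ⟨y, hyO, hyω, hyD⟩ := mem_closure_iff.1 hcl _ hO
      ⟨by show b ∉ seg c c; rw [seg_self]; exact hbc, Metric.mem_ball_self (by positivity)⟩
    obtain ⟨x, hx⟩ := mem_iUnion.1 hyω
    have hW := hO.inter (open_not_mem_seg y0 c)
    have hWI : ∀ w, w ∈ ({w | b ∉ seg c w} ∩ Metric.ball c (1 / ((n : ℝ) + 1))) ∩ {w | c ∉ seg y0 w} → w ∈ I :=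
      fun w hw => (hb w hw.2).resolve_right hw.1.1
    obtain ⟨m, _, hm⟩ := om_visit hx hW ⟨hyO, hyD⟩ 0
    obtain ⟨m', hm', hm2⟩ := om_visit hx hW ⟨hyO, hyD⟩ (m + n + 1)
    refine ⟨m' - m, by omega, f^[m'] x, ⟨f^[m] x, hWI _ hm, ?_⟩, hWI _ hm2, hm2.2, hm2.1.2⟩
    rw [← iterate_add_apply]; congr 2; omega
  choose k hk q hqk hqI hqD hqc using hret
  set p := k 0 with hp
  have hp1 : 1 ≤ p := hk 0
  have hmeet : ∀ m, ((f^[m + p] '' I) ∩ (f^[m] '' I)).Nonempty := by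
    intro m
    obtain ⟨u, hu, hu2⟩ := hqk 0
    exact ⟨f^[m] (q 0), ⟨u, hu, by rw [iterate_add_apply, hu2]⟩, ⟨_, hqI 0, rfl⟩⟩
  obtain ⟨r, hr⟩ : ∃ r, ∃ᶠ n in atTop, k n % p = r := by
    by_contra h
    push Not at h
    have h2 : ∀ r ∈ Finset.range p, ∀ᶠ n in atTop, k n % p ≠ r := fun r _ => by
      simpa using h r
    have h3 := (Filter.eventually_all_finset (Finset.range p)).2 h2
    obtain ⟨n, hn⟩ := h3.exists
    exact hn _ (Finset.mem_range.2 (Nat.mod_lt _ hp1)) rfl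
  rw [frequently_atTop] at hr
  obtain ⟨n1, _, hn1⟩ := hr 0
  set E : ℕ → Set X := fun j => f^[k n1 + j * p] '' I with hE
  have hEm : ∀ j, (E j ∩ E (j + 1)).Nonempty := fun j => by
    have := hmeet (k n1 + j * p)
    rw [inter_comm] at this
    show ((f^[k n1 + j * p] '' I) ∩ (f^[k n1 + (j + 1) * p] '' I)).Nonempty
    rw [show k n1 + (j + 1) * p = k n1 + j * p + p by ring]; exact this
  have hED : ∀ j, ∀ y ∈ E j, c ∉ seg y0 y := by
    intro j
    induction j with
    | zero => exact hside _ (q n1) (by have := hk n1; omega) (by simpa using hqk n1) (hqD n1)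
    | succ j ih =>
      obtain ⟨z, hz1, hz2⟩ := hEm j
      exact hside _ z (by have := hk n1; omega) hz2 (ih z hz1)
  have hTp : IsPreconnected (⋃ j, E j) := IsPreconnected.iUnion_of_chain (fun j => hpre _) fun j => hEm j
  set T := ⋃ j, E j with hT
  have hTD : ∀ y ∈ T, c ∉ seg y0 y := fun y hy => by
    obtain ⟨j, hj⟩ := mem_iUnion.1 hy; exact hED j y hj
  set g := f^[p] with hg
  have hgc : Continuous g := hf.iterate p
  have hcT : c ∉ T := fun h => hTD c h (right_seg _ _)
  have hgE : ∀ m j, g^[m] '' E j = E (j + m) := by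
    intro m j
    show g^[m] '' (f^[k n1 + j * p] '' I) = f^[k n1 + (j + m) * p] '' I
    rw [← image_comp, hg, ← iterate_mul, ← iterate_add]; congr 2; ring
  have hgT : ∀ m, g^[m] '' T ⊆ T := fun m => by
    rw [hT, image_iUnion]
    exact iUnion_subset fun j => by rw [hgE]; exact subset_iUnion E (j + m)
  have hcg : ∀ m, c ∈ closure (g^[m] '' T) := by
    intro m
    rw [Metric.mem_closure_iff]
    intro ε hε
    obtain ⟨n2, hn2⟩ := exists_nat_one_div_lt hε
    obtain ⟨n, hn, hnr⟩ := hr (n2 + k n1 + m * p)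
    refine ⟨q n, ?_, ?_⟩
    · have hkn := hk n
      have hmod : k n1 ≡ k n [MOD p] := by show _ % _ = _ % _; rw [hnr, hn1]
      obtain ⟨j, hj⟩ := (Nat.modEq_iff_dvd' (by omega)).1 hmod
      have hj2 : k n = k n1 + j * p := by rw [mul_comm j p, ← hj]; omega
      have hjm : m ≤ j := by
        by_contra h
        have : j * p ≤ m * p := Nat.mul_le_mul_right _ (by omega)
        omega
      have h1 : q n ∈ E j := by show q n ∈ f^[k n1 + j * p] '' I; rw [← hj2]; exact hqk n
      rw [show j = (j - m) + m by omega, ← hgE] at h1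
      exact image_mono (subset_iUnion E _) h1
    · rw [dist_comm]
      refine (hqc n).trans (lt_of_le_of_lt ?_ hn2)
      have : (n2 : ℝ) ≤ n := by exact_mod_cast (by omega : n2 ≤ n)
      gcongr
  have hfin := clos_diff_finite hTp
  have hc2 : ∀ m, ∃ s ∈ closure T, g^[m] s = c := by
    intro m
    have := hcg m
    rw [← image_closure_of_isCompact (isClosed_closure.isCompact) (hgc.iterate m).continuousOn] at this
    exact this
  obtain ⟨s, hs, hsc⟩ := hc2 (hfin.toFinset.card)
  have hmem : ∀ i ∈ Finset.range (hfin.toFinset.card + 1), g^[i] s ∈ hfin.toFinset := by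
    intro i hi
    rw [Finset.mem_range] at hi
    rw [Finite.mem_toFinset]
    constructor
    · exact closure_mono (hgT i) (image_closure_subset_closure_image (hgc.iterate i) ⟨s, hs, rfl⟩)
    · intro h
      refine hcT (hgT (hfin.toFinset.card - i) ⟨_, h, ?_⟩)
      rw [← iterate_add_apply, Nat.sub_add_cancel (by omega), hsc]
  obtain ⟨i, hi, j, hj, hij, he⟩ := Finset.exists_ne_map_eq_of_card_lt_of_maps_to (by simp) hmem
  wlog hlt : i < j generalizing i j
  · exact this j hj i hi hij.symm he.symm (by omega)
  rw [Finset.mem_range] at hi hj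
  refine hnp (p * (j - i)) (Nat.mul_pos hp1 (by omega)) ?_
  rw [iterate_mul, ← hg]
  set M := hfin.toFinset.card
  calc g^[j - i] c = g^[M - i] (g^[j] s) := by
        rw [← hsc, ← iterate_add_apply, ← iterate_add_apply, show j - i + M = M - i + j by omega]
    _ = g^[M - i] (g^[i] s) := by rw [he]
    _ = c := by rw [← iterate_add_apply, Nat.sub_add_cancel (by omega), hsc]

theorem om_closed {f : X → X} (hf : Continuous f) : IsClosed (omegaSet f) := by
  refine closure_subset_iff_isClosed.1 fun c hc => ?_
  by_contra hcω
  have hnp : ∀ n, 1 ≤ n → f^[n] c ≠ c := fun n hn h => hcω (per_om hn h)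
  obtain ⟨y0, hy0, hcl⟩ : ∃ y0, y0 ≠ c ∧ c ∈ closure (omegaSet f ∩ {w | c ∉ seg y0 w}) := by
    have hF := cmps_finite (isPreconnected_singleton (x := c)) ⟨c, rfl⟩
    have h1 : omegaSet f ⊆ ⋃ D ∈ (ccp {c}) '' {c}ᶜ, omegaSet f ∩ D := fun y hy => by
      have hyc : y ∈ ({c} : Set X)ᶜ := fun h => hcω (by rw [← (h : y = c)]; exact hy)
      exact mem_biUnion (mem_image_of_mem _ hyc) ⟨hy, mem_connectedComponentIn hyc⟩
    have h2 := closure_mono h1 hc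
    rw [hF.closure_biUnion] at h2
    obtain ⟨D, ⟨y0, hy0, rfl⟩, h3⟩ := mem_iUnion₂.1 h2
    refine ⟨y0, hy0, closure_mono ?_ h3⟩
    rintro w ⟨hw, hw2⟩
    exact ⟨hw, disjoint_singleton_right.1 ((mem_cmp_iff hy0).1 hw2)⟩
  let G : Type v := {b : X // b ≠ c ∧ ∀ x, c ∉ seg y0 x → x ∈ seg c b ∨ b ∈ seg c x}
  have step : ∀ (b : G) (n : ℕ), ∃ (b' : G) (k : ℕ), 1 ≤ k ∧ seg c b'.1 ⊆ Metric.ball c (1 / ((n : ℝ) + 1)) ∧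
      seg c b'.1 ⊆ f^[k] '' seg c b.1 := by
    intro b n
    obtain ⟨k, hk1, hk, z, hz, hzD⟩ := om_claim hf hnp b.2.2 b.2.1 hcl
    have hzc : c ≠ z := fun h => hzD (by rw [← h]; exact right_seg _ _)
    obtain ⟨y, hy, hyc, hyO, hyN⟩ := NB hy0.symm (O := Metric.ball c (1 / ((n : ℝ) + 1)) ∩ {z}ᶜ)
      (Metric.isOpen_ball.inter isOpen_compl_singleton) ⟨Metric.mem_ball_self (by positivity), hzc⟩
    have hyN' : ∀ x, c ∉ seg y0 x → x ∈ seg c y ∨ y ∈ seg c x := fun x hx => hyN x (by rwa [seg_comm])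
    refine ⟨⟨y, hyc, hyN'⟩, k, hk1, fun w hw => (hyO hw).1, ?_⟩
    have h1 : y ∈ seg c z := (hyN' z hzD).resolve_left fun h => (hyO h).2 rfl
    have h2 : IsPreconnected (f^[k] '' seg c b.1) := (segP c b.1).image _ (hf.iterate k).continuousOn
    exact (seg_sub_seg (left_seg _ _) h1).trans (seg_sub h2 hk hz)
  choose nb kk hkk hball himg using step
  obtain ⟨b0⟩ : Nonempty G := by
    obtain ⟨y, hy, hyc, hyO, hyN⟩ := NB hy0.symm isOpen_univ (mem_univ c)
    exact ⟨⟨y, hyc, fun x hx => hyN x (by rwa [seg_comm])⟩⟩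
  let B : ℕ → G := fun n => Nat.rec b0 (fun n b => nb b n) n
  have hB : ∀ n, B (n + 1) = nb (B n) n := fun n => rfl
  let s : ℕ → ℕ := fun n => ∑ i ∈ Finset.range n, kk (B i) i
  have hs : ∀ n, s (n + 1) = s n + kk (B n) n := fun n => Finset.sum_range_succ _ _
  have hsn : ∀ n, n ≤ s n := fun n => by
    induction n with
    | zero => simp
    | succ n ih => rw [hs]; have := hkk (B n) n; omega
  have hex : ∀ n, ∀ w ∈ seg c (B n).1, ∃ x, f^[s n] x = w ∧ ∀ j ≤ n, f^[s j] x ∈ seg c (B j).1 := by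
    intro n
    induction n with
    | zero =>
      intro w hw
      refine ⟨w, rfl, fun j hj => ?_⟩
      obtain rfl : j = 0 := by omega
      exact hw
    | succ n ih =>
      intro w hw
      obtain ⟨w', hw', hww⟩ := himg (B n) n hw
      obtain ⟨x, hx, hxj⟩ := ih w' hw'
      have h1 : f^[s (n + 1)] x = w := by rw [hs, add_comm, iterate_add_apply, hx, hww]
      refine ⟨x, h1, fun j hj => ?_⟩
      rcases Nat.lt_or_ge j (n + 1) with h | h
      · exact hxj j (by omega)
      · obtain rfl : j = n + 1 := by omega
        rw [h1]; exact hw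
  obtain ⟨x, hx⟩ := IsCompact.nonempty_iInter_of_sequence_nonempty_isCompact_isClosed
    (fun n => {x | ∀ j ≤ n, f^[s j] x ∈ seg c (B j).1})
    (fun n x hx j hj => hx j (by omega))
    (fun n => by
      obtain ⟨x, _, hx⟩ := hex n c (left_seg _ _)
      exact ⟨x, hx⟩)
    (IsClosed.isCompact (by
      simp only [setOf_forall]
      exact isClosed_iInter fun j => isClosed_iInter fun _ => (segC _ _).preimage (hf.iterate _)))
    (fun n => by
      simp only [setOf_forall]
      exact isClosed_iInter fun j => isClosed_iInter fun _ => (segC _ _).preimage (hf.iterate _))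
  refine hcω (mem_iUnion.2 ⟨x, om_of_visit fun W hW hcW n => ?_⟩)
  obtain ⟨ε, hε, hεW⟩ := Metric.isOpen_iff.1 hW c hcW
  obtain ⟨n2, hn2⟩ := exists_nat_one_div_lt hε
  refine ⟨s (n + n2 + 1), (by have := hsn (n + n2 + 1); omega), hεW ?_⟩
  have h1 := hball (B (n + n2)) (n + n2) (mem_iInter.1 hx (n + n2 + 1) (n + n2 + 1) le_rfl)
  refine Metric.ball_subset_ball (le_trans ?_ hn2.le) h1
  push_cast
  have : (0:ℝ) ≤ n := by positivity
  gcongr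
  linarith

theorem main_aux (hX : IsTree X) (f : X → X) (hf : Continuous f) (h0 : topEntropy f = 0) :
    supSeqEntropyOn f (omegaSet f) = 0 ∧ supSeqEntropyOn f (nonWanderingSet f) = 0 ∧
      supSeqEntropyOn f (chainRecurrentSet f) = 0 := by
  have hHS : ¬ HS f := fun h => HS_entropy h h0
  exact ⟨genZero hf hHS (omega_CR hf) (om_closed hf) (om_inv hf),
    genZero hf hHS (NW_CR hf) nw_closed (nw_inv hf),
    genZero hf hHS subset_rfl (CR_closed hf) (fun _ hz => CR_inv hf hz)⟩

end FIN9

/-- A zero topological entropy continuous tree map has zero topological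
sequence entropy when restricted to its ω-limit set, its non-wandering set and its chain
recurrent set. -/
theorem seqEntropy_tree_restrictions_eq_zero {X : Type*} [MetricSpace X] (hX : IsTree X)
    (f : X → X) (hf : Continuous f) (h0 : topEntropy f = 0) :
    supSeqEntropyOn f (omegaSet f) = 0 ∧ supSeqEntropyOn f (nonWanderingSet f) = 0 ∧
      supSeqEntropyOn f (chainRecurrentSet f) = 0 := by
  haveI := tree_TA hX
  exact main_aux hX f hf h0
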